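/- Let α > 0, d ≥ 1, ℓ = ⌊α⌋⁻, m = C(ℓ+d, ℓ), let 0 < β ≤ α, and fix constants c_L ≥ c_d > 0 and c_N > 0. There is a constant C > 0 depending only on α, β, d, c_d, c_L and c_N such that the following holds. Let L ∈ (0, 1/2], let x ∈ ℝ^d, and let A ⊂ ℝ^d be a set of m points satisfying the geometric hypotheses at scale L with constants c_L, c_d, c_N. Then for every f₀ ∈ C^β_1 and every τ > 0, the Matérn kernel matrix K_{τA,τA} is invertible and |f₀(x) − K_{τx,τA} (K_{τA,τA})⁻¹ f₀(A)| ≤ C (τ^α L^α + L^β) Λ, where f₀(A) denotes the vector (f₀(w))_{w∈A}, Λ = 1 if α ∉ ℕ and Λ = ln(1/L) if α ∈ ℕ. -/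

import Mathlib

open Matrix MeasureTheory

noncomputable section

/-- The Matérn function with regularity `α` on ℝ^d (Fourier normalization):
`K_α(x) = ∫ cos⟨x,ξ⟩ (1+‖ξ‖₂²)^{-(α+d/2)} dξ`. -/
def matern (α : ℝ) (d : ℕ) (x : Fin d → ℝ) : ℝ :=
  ∫ ξ : Fin d → ℝ, Real.cos (∑ j, x j * ξ j) * (1 + ∑ j, ξ j ^ 2) ^ (-(α + (d : ℝ) / 2))

/-- `⌊α⌋⁻`, the largest integer strictly smaller than `α` (for `α > 0`). -/
def lbelow (α : ℝ) : ℕ := Nat.ceil α - 1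

/-- `α` is a (nonnegative) integer. -/
def IsNatVal (α : ℝ) : Prop := ∃ n : ℕ, α = n

/-- The Euclidean norm `‖x‖₂` on ℝ^d. -/
def nrm {d : ℕ} (x : Fin d → ℝ) : ℝ := Real.sqrt (∑ j, x j ^ 2)

/-- Partial derivative in the `j`-th coordinate. -/
def pder (d : ℕ) (j : Fin d) (f : (Fin d → ℝ) → ℝ) : (Fin d → ℝ) → ℝ :=
  fun x => fderiv ℝ f x (Pi.single j 1)

/-- The iterated partial derivative `∂^k` associated with a multi-index `k ∈ ℕ^d`. -/
def mder (d : ℕ) (k : Fin d → ℕ) (f : (Fin d → ℝ) → ℝ) : (Fin d → ℝ) → ℝ :=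
  (List.finRange d).foldr (fun j g => (pder d j)^[k j] g) f

/-- Mixed derivative `F^{(k₁,k₂)}(x₁,x₂) = ∂^{k₁}_{x₁} ∂^{k₂}_{x₂} F(x₁,x₂)`. -/
def mder2 (d : ℕ) (k₁ k₂ : Fin d → ℕ) (F : (Fin d → ℝ) → (Fin d → ℝ) → ℝ)
    (x₁ x₂ : Fin d → ℝ) : ℝ :=
  mder d k₁ (fun y => mder d k₂ (F y) x₂) x₁

/-- The Matérn kernel matrix `K_{A,A} = (K(w_i, w_j))_{i,j}`. -/
def maternMat (α : ℝ) (d : ℕ) {n : ℕ} (w : Fin n → Fin d → ℝ) :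
    Matrix (Fin n) (Fin n) ℝ :=
  Matrix.of fun i j => matern α d (w i - w j)

/-- The Matérn kernel column vector `K_{A,x} = (K(w_i, x))_i`. -/
def maternVec (α : ℝ) (d : ℕ) {n : ℕ} (w : Fin n → Fin d → ℝ) (x : Fin d → ℝ) :
    Fin n → ℝ :=
  fun i => matern α d (w i - x)

/-- The conditional kernel `K̃(x₁,x₂) = K(x₁,x₂) − K_{x₁,A} K_{A,A}⁻¹ K_{A,x₂}`. -/
def condK (α : ℝ) (d : ℕ) {n : ℕ} (w : Fin n → Fin d → ℝ) (x₁ x₂ : Fin d → ℝ) : ℝ :=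
  matern α d (x₁ - x₂) -
    maternVec α d w x₁ ⬝ᵥ ((maternMat α d w)⁻¹ *ᵥ maternVec α d w x₂)

/-- The unit cube `[0,1]^d`. -/
def unitCube (d : ℕ) : Set (Fin d → ℝ) := {x | ∀ t, 0 ≤ x t ∧ x t ≤ 1}

/-- `A = {w_1,…,w_m}` is a norming set for `𝒫_l(Ω)` with norming constant `c`. -/
def IsNorming {d : ℕ} (l : ℕ) (Ω : Set (Fin d → ℝ)) {m : ℕ}
    (w : Fin m → Fin d → ℝ) (c : ℝ) : Prop :=
  ∀ P : MvPolynomial (Fin d) ℝ, P.totalDegree ≤ l →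
    ∀ x ∈ Ω, |MvPolynomial.eval x P| ≤ c * ⨆ i : Fin m, |MvPolynomial.eval (w i) P|

/-- Axis-parallel cube with corner `z` and side length `s`. -/
def cube (d : ℕ) (z : Fin d → ℝ) (s : ℝ) : Set (Fin d → ℝ) :=
  {y | ∀ t, z t ≤ y t ∧ y t ≤ z t + s}

/-- Geometric hypotheses at scale `L` with constants `c_L, c_d, c_N`: `A ∪ {x}` lies in an
axis-parallel cube of side length at most `c_L·L`, the points `w_1,…,w_m, x` are pairwise at
`‖·‖_∞`-distance at least `c_d·L`, and `A` is a norming set for `𝒫_{⌊α⌋⁻}` of that cube with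
norming constant `c_N`. -/
def GeomHyp (α : ℝ) (d : ℕ) (cL cd cN L : ℝ) {m : ℕ}
    (w : Fin m → Fin d → ℝ) (x : Fin d → ℝ) : Prop :=
  ∃ z : Fin d → ℝ, ∃ s : ℝ, 0 ≤ s ∧ s ≤ cL * L ∧
    (∀ i, w i ∈ cube d z s) ∧ x ∈ cube d z s ∧
    (∀ i j, i ≠ j → ∃ t, cd * L ≤ |w i t - w j t|) ∧
    (∀ i, ∃ t, cd * L ≤ |w i t - x t|) ∧
    IsNorming (lbelow α) (cube d z s) w cN

/-- `f₀ ∈ C^β_1`: `f₀` is `⌊β⌋⁻`-times continuously differentiable, all partial derivatives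
of order `≤ ⌊β⌋⁻` are bounded by `1`, and the derivatives of order `⌊β⌋⁻` are
`(β−⌊β⌋⁻)`-Hölder with constant `1`. -/
def HolderBall (d : ℕ) (β : ℝ) (f : (Fin d → ℝ) → ℝ) : Prop :=
  ContDiff ℝ ((lbelow β : ℕ) : ℕ∞) f ∧
  (∀ k : Fin d → ℕ, (∑ j, k j) ≤ lbelow β → ∀ x : Fin d → ℝ, |mder d k f x| ≤ 1) ∧
  (∀ k : Fin d → ℕ, (∑ j, k j) = lbelow β → ∀ x y : Fin d → ℝ,
    |mder d k f x - mder d k f y| ≤ nrm (x - y) ^ (β - (lbelow β : ℝ)))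

/-!
The kriging weights minimise the energy of the error functional `f ↦ f(x) - ∑ᵢ vᵢ f(wᵢ)` over all
`v`. The norming hypothesis provides a competitor: a rule with bounded weights that reproduces
polynomials of degree at most `⌊α⌋⁻` at `x`. Its error functional annihilates these polynomials, so
its Fourier transform vanishes at the origin to order `⌊α⌋⁻ + 1`, and integrating against the
spectral density shows that at scale `h ≤ 1` its energy is of order `h^(2α)`, up to a logarithmic
factor when `α = ⌊α⌋⁻ + 1`. Conversely, the low frequencies show that the energy of a functional
supported on the nodes controls its moments of degree at most `⌊α⌋⁻`. Hence the kriging weights are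
bounded and reproduce monomials up to an error of order `h^α`, times the logarithm, and a Taylor
expansion of `f₀` turns this into the claimed bound with `h` comparable to `τ L`. For `h ≥ 1` the
weights are still bounded, and so is the error, whereas the claimed rate is bounded below.
-/

/-! ### Spectral representation -/

section Spectral

variable {α : ℝ} {d : ℕ} {ι : Type*} [Fintype ι]

/-- The spectral density of the Matérn kernel. -/
def maternDensity (α : ℝ) (d : ℕ) (ξ : Fin d → ℝ) : ℝ :=
  (1 + ∑ j, ξ j ^ 2) ^ (-(α + (d : ℝ) / 2))

/-- The plane wave `exp(i⟨y, ξ⟩)`. -/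
def wave {d : ℕ} (y ξ : Fin d → ℝ) : ℂ :=
  Complex.exp (((y ⬝ᵥ ξ : ℝ) : ℂ) * Complex.I)

/-- The exponential sum `∑ᵢ bᵢ exp(i⟨yᵢ, ξ⟩)`, the Fourier transform of `∑ᵢ bᵢ δ_{yᵢ}`. -/
def waveSum {d : ℕ} {ι : Type*} [Fintype ι] (y : ι → Fin d → ℝ) (b : ι → ℝ) (ξ : Fin d → ℝ) : ℂ :=
  ∑ i, (b i : ℂ) * wave (y i) ξ

/-- The quadratic form of the Matérn kernel at the points `y` with coefficients `b`: the squared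
energy norm of the functional `∑ᵢ bᵢ δ_{yᵢ}`. -/
def maternForm (α : ℝ) (d : ℕ) {ι : Type*} [Fintype ι] (y : ι → Fin d → ℝ) (b : ι → ℝ) : ℝ :=
  ∑ i, ∑ j, b i * b j * matern α d (y i - y j)

lemma one_add_sum_sq_pos (ξ : Fin d → ℝ) : 0 < 1 + ∑ j, ξ j ^ 2 := by positivity

lemma maternDensity_pos (α : ℝ) (ξ : Fin d → ℝ) : 0 < maternDensity α d ξ :=
  Real.rpow_pos_of_pos (one_add_sum_sq_pos ξ) _

lemma continuous_maternDensity (α : ℝ) (d : ℕ) : Continuous (maternDensity α d) :=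
  Continuous.rpow_const (by fun_prop) fun ξ => Or.inl (one_add_sum_sq_pos ξ).ne'

lemma norm_sq_le_sum_sq (ξ : Fin d → ℝ) : ‖ξ‖ ^ 2 ≤ ∑ j, ξ j ^ 2 := by
  have h : ‖ξ‖ ≤ √(∑ j, ξ j ^ 2) :=
    (pi_norm_le_iff_of_nonneg (Real.sqrt_nonneg _)).2 fun j => Real.abs_le_sqrt <|
      Finset.single_le_sum (f := fun j => ξ j ^ 2) (fun j _ => sq_nonneg _) (Finset.mem_univ j)
  exact (Real.le_sqrt (norm_nonneg _) (by positivity)).1 h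

lemma maternDensity_le (hα : 0 < α) (ξ : Fin d → ℝ) :
    maternDensity α d ξ ≤ (1 + ‖ξ‖ ^ 2) ^ (-(α + (d : ℝ) / 2)) :=
  Real.rpow_le_rpow_of_nonpos (by positivity) (by linarith [norm_sq_le_sum_sq ξ])
    (neg_nonpos.2 (by positivity))

lemma integrable_one_add_norm_sq_rpow (hα : 0 < α) (d : ℕ) :
    Integrable fun ξ : Fin d → ℝ => (1 + ‖ξ‖ ^ 2) ^ (-(α + (d : ℝ) / 2)) := by
  have h := integrable_rpow_neg_one_add_norm_sq (E := Fin d → ℝ) (μ := volume)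
    (r := 2 * α + d) (by simp; linarith)
  convert h using 3
  ring

lemma integrable_maternDensity (hα : 0 < α) (d : ℕ) : Integrable (maternDensity α d) := by
  refine (integrable_one_add_norm_sq_rpow hα d).mono'
    (continuous_maternDensity α d).aestronglyMeasurable (.of_forall fun ξ => ?_)
  rw [Real.norm_of_nonneg (maternDensity_pos α ξ).le]
  exact maternDensity_le hα ξ

lemma matern_sub_comm (α : ℝ) (d : ℕ) (x y : Fin d → ℝ) :
    matern α d (x - y) = matern α d (y - x) := by
  simp only [matern, ← neg_sub y x, Pi.neg_apply, neg_mul, Finset.sum_neg_distrib, Real.cos_neg]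

lemma matern_zero_pos (hα : 0 < α) (d : ℕ) : 0 < matern α d 0 := by
  have h0 : matern α d 0 = ∫ ξ, maternDensity α d ξ := by simp [matern, maternDensity]
  have hsupp : Function.support (maternDensity α d) = Set.univ :=
    Set.eq_univ_of_forall fun ξ => (maternDensity_pos α ξ).ne'
  rw [h0, integral_pos_iff_support_of_nonneg (fun ξ => (maternDensity_pos α ξ).le)
    (integrable_maternDensity hα d), hsupp]
  exact isOpen_univ.measure_pos _ Set.univ_nonempty

lemma norm_wave (y ξ : Fin d → ℝ) : ‖wave y ξ‖ = 1 := Complex.norm_exp_ofReal_mul_I _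

lemma continuous_waveSum (y : ι → Fin d → ℝ) (b : ι → ℝ) : Continuous (waveSum y b) := by
  unfold waveSum wave dotProduct; fun_prop

lemma waveSum_smul (r : ℝ) (y : ι → Fin d → ℝ) (b : ι → ℝ) (ξ : Fin d → ℝ) :
    waveSum (r • y) b ξ = waveSum y b (r • ξ) := by
  simp only [waveSum, wave, Pi.smul_apply, smul_dotProduct, dotProduct_smul]

lemma norm_waveSum_le (y : ι → Fin d → ℝ) (b : ι → ℝ) (ξ : Fin d → ℝ) :
    ‖waveSum y b ξ‖ ≤ ∑ i, |b i| := by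
  refine (norm_sum_le _ _).trans (Finset.sum_le_sum fun i _ => ?_)
  simp [norm_wave]

lemma norm_waveSum_sq (y : ι → Fin d → ℝ) (b : ι → ℝ) (ξ : Fin d → ℝ) :
    ‖waveSum y b ξ‖ ^ 2 = ∑ i, ∑ j, b i * b j * Real.cos ((y i - y j) ⬝ᵥ ξ) := by
  have hre : (waveSum y b ξ).re = ∑ i, b i * Real.cos (y i ⬝ᵥ ξ) := by
    simp only [waveSum, Complex.re_sum, Complex.re_ofReal_mul, wave, Complex.exp_ofReal_mul_I_re]
  have him : (waveSum y b ξ).im = ∑ i, b i * Real.sin (y i ⬝ᵥ ξ) := by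
    simp only [waveSum, Complex.im_sum, Complex.im_ofReal_mul, wave, Complex.exp_ofReal_mul_I_im]
  rw [Complex.sq_norm, Complex.normSq_apply, hre, him]
  simp only [Finset.sum_mul_sum, ← Finset.sum_add_distrib, sub_dotProduct, Real.cos_sub]
  exact Finset.sum_congr rfl fun i _ => Finset.sum_congr rfl fun j _ => by ring

lemma integrable_norm_waveSum_sq (hα : 0 < α) (y : ι → Fin d → ℝ) (b : ι → ℝ) :
    Integrable fun ξ => ‖waveSum y b ξ‖ ^ 2 * maternDensity α d ξ := by
  refine (integrable_maternDensity hα d).bdd_mul (c := (∑ i, |b i|) ^ 2)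
    ((continuous_waveSum y b).norm.pow 2).aestronglyMeasurable (.of_forall fun ξ => ?_)
  rw [norm_pow, norm_norm]
  exact pow_le_pow_left₀ (norm_nonneg _) (norm_waveSum_le y b ξ) 2

lemma maternForm_eq_integral (hα : 0 < α) (y : ι → Fin d → ℝ) (b : ι → ℝ) :
    maternForm α d y b = ∫ ξ, ‖waveSum y b ξ‖ ^ 2 * maternDensity α d ξ := by
  have hint (z : Fin d → ℝ) : Integrable fun ξ => Real.cos (z ⬝ᵥ ξ) * maternDensity α d ξ :=
    (integrable_maternDensity hα d).bdd_mul (c := 1)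
      (Continuous.aestronglyMeasurable (by unfold dotProduct; fun_prop))
      (.of_forall fun ξ => Real.abs_cos_le_one _)
  simp_rw [norm_waveSum_sq, Finset.sum_mul, mul_assoc]
  rw [integral_finsetSum _ fun i _ => integrable_finsetSum _ fun j _ =>
    ((hint _).const_mul _).const_mul _, maternForm]
  refine Finset.sum_congr rfl fun i _ => ?_
  rw [integral_finsetSum _ fun j _ => ((hint _).const_mul _).const_mul _]
  refine Finset.sum_congr rfl fun j _ => ?_
  rw [integral_const_mul, integral_const_mul, mul_assoc]
  rfl

lemma maternForm_nonneg (hα : 0 < α) (y : ι → Fin d → ℝ) (b : ι → ℝ) :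
    0 ≤ maternForm α d y b := by
  rw [maternForm_eq_integral hα]
  exact integral_nonneg fun ξ => mul_nonneg (sq_nonneg _) (maternDensity_pos α ξ).le

end Spectral

/-! ### Kriging weights -/

section Kriging

variable {α : ℝ} {d n : ℕ}

/-- The kriging weights `K_{A,A}⁻¹ K_{A,x}` at the nodes `A = {y_1, …, y_n}`. -/
def krigingWeight (α : ℝ) (d : ℕ) (y : Fin n → Fin d → ℝ) (x : Fin d → ℝ) : Fin n → ℝ :=
  (maternMat α d y)⁻¹ *ᵥ maternVec α d y x

/-- Together with `errorCoeffs v`, the nodes `x, y_1, …, y_n` encode the error functional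
`δ_x - ∑ᵢ vᵢ δ_{yᵢ}` of the rule `f ↦ ∑ᵢ vᵢ f(yᵢ)`; `none` indexes `x`. -/
def errorNodes (x : Fin d → ℝ) (y : Fin n → Fin d → ℝ) (o : Option (Fin n)) : Fin d → ℝ :=
  o.elim x y

/-- The coefficients of the error functional `δ_x - ∑ᵢ vᵢ δ_{yᵢ}`, see `errorNodes`. -/
def errorCoeffs (v : Fin n → ℝ) (o : Option (Fin n)) : ℝ := o.elim 1 (-v)

lemma sum_errorCoeffs_mul (x : Fin d → ℝ) (y : Fin n → Fin d → ℝ) (v : Fin n → ℝ)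
    (f : (Fin d → ℝ) → ℝ) :
    ∑ o, errorCoeffs v o * f (errorNodes x y o) = f x - ∑ i, v i * f (y i) := by
  simp [errorCoeffs, errorNodes, Fintype.sum_option, sub_eq_add_neg]

lemma sum_abs_errorCoeffs (v : Fin n → ℝ) : ∑ o, |errorCoeffs v o| = 1 + ∑ i, |v i| := by
  simp [errorCoeffs, Fintype.sum_option]

lemma sum_abs_errorCoeffs_le {v : Fin n → ℝ} {C : ℝ} (hv : ∀ i, |v i| ≤ C) :
    ∑ o, |errorCoeffs v o| ≤ 1 + n * C := by
  rw [sum_abs_errorCoeffs]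
  grw [Finset.sum_le_sum fun i _ => hv i]
  simp

lemma errorNodes_mem {S : Set (Fin d → ℝ)} {x : Fin d → ℝ} {y : Fin n → Fin d → ℝ} (hx : x ∈ S)
    (hy : ∀ i, y i ∈ S) (o : Option (Fin n)) : errorNodes x y o ∈ S := by
  cases o
  exacts [hx, hy _]

lemma errorNodes_smul (r : ℝ) (x : Fin d → ℝ) (y : Fin n → Fin d → ℝ) :
    errorNodes (r • x) (r • y) = r • errorNodes x y := by
  ext o; cases o <;> rfl

lemma maternMat_transpose (y : Fin n → Fin d → ℝ) : (maternMat α d y)ᵀ = maternMat α d y := by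
  ext i j
  exact matern_sub_comm α d _ _

lemma maternVec_dotProduct_inv_mulVec (y : Fin n → Fin d → ℝ) (x : Fin d → ℝ) (f : Fin n → ℝ) :
    maternVec α d y x ⬝ᵥ ((maternMat α d y)⁻¹ *ᵥ f) = krigingWeight α d y x ⬝ᵥ f := by
  rw [krigingWeight, dotProduct_mulVec, ← mulVec_transpose, transpose_nonsing_inv,
    maternMat_transpose]

lemma maternMat_mulVec_krigingWeight {y : Fin n → Fin d → ℝ}
    (hdet : IsUnit (maternMat α d y).det) (x : Fin d → ℝ) :
    maternMat α d y *ᵥ krigingWeight α d y x = maternVec α d y x := by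
  rw [krigingWeight, mulVec_mulVec, mul_nonsing_inv _ hdet, one_mulVec]

lemma maternForm_eq_dotProduct (y : Fin n → Fin d → ℝ) (b : Fin n → ℝ) :
    maternForm α d y b = b ⬝ᵥ (maternMat α d y *ᵥ b) := by
  simp only [maternForm, dotProduct, mulVec, maternMat, of_apply, Finset.mul_sum]
  exact Finset.sum_congr rfl fun i _ => Finset.sum_congr rfl fun j _ => by ring

lemma isUnit_det_maternMat_of_maternForm_ne_zero {y : Fin n → Fin d → ℝ}
    (h : ∀ c ≠ 0, maternForm α d y c ≠ 0) : IsUnit (maternMat α d y).det := by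
  rw [isUnit_iff_ne_zero]
  intro hdet
  obtain ⟨c, hc, hc0⟩ := Matrix.exists_mulVec_eq_zero_iff.2 hdet
  exact h c hc (by rw [maternForm_eq_dotProduct, hc0, dotProduct_zero])

lemma maternForm_error (y : Fin n → Fin d → ℝ) (x : Fin d → ℝ) (v : Fin n → ℝ) :
    maternForm α d (errorNodes x y) (errorCoeffs v) =
      matern α d 0 - 2 * (v ⬝ᵥ maternVec α d y x) + maternForm α d y v := by
  simp only [maternForm, errorNodes, errorCoeffs, Fintype.sum_option, Option.elim_none,
    Option.elim_some, sub_self, Pi.neg_apply, matern_sub_comm α d x, Finset.sum_add_distrib,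
    mul_one, one_mul, neg_mul, mul_neg, Finset.sum_neg_distrib, dotProduct, maternVec]
  ring

/- Expanding the square around the minimiser: the kriging error is orthogonal to the span of the
`δ_{yᵢ}` in the energy inner product. -/
lemma maternForm_error_eq_add {y : Fin n → Fin d → ℝ}
    (hdet : IsUnit (maternMat α d y).det) (x : Fin d → ℝ)
    (v : Fin n → ℝ) :
    maternForm α d (errorNodes x y) (errorCoeffs v) =
      maternForm α d (errorNodes x y) (errorCoeffs (krigingWeight α d y x)) +
        maternForm α d y (v - krigingWeight α d y x) := by
  set u := krigingWeight α d y x with hu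
  have hadj : u ⬝ᵥ (maternMat α d y *ᵥ v) = v ⬝ᵥ (maternMat α d y *ᵥ u) := by
    rw [dotProduct_mulVec, ← mulVec_transpose, maternMat_transpose, dotProduct_comm]
  simp only [maternForm_error, maternForm_eq_dotProduct, ← maternMat_mulVec_krigingWeight hdet x,
    ← hu, mulVec_sub, dotProduct_sub, sub_dotProduct, hadj]
  ring

lemma maternForm_sub_krigingWeight_le (hα : 0 < α) {y : Fin n → Fin d → ℝ}
    (hdet : IsUnit (maternMat α d y).det) (x : Fin d → ℝ)
    (v : Fin n → ℝ) :
    maternForm α d y (v - krigingWeight α d y x) ≤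
      maternForm α d (errorNodes x y) (errorCoeffs v) := by
  have h := maternForm_nonneg hα (errorNodes x y) (errorCoeffs (krigingWeight α d y x))
  linarith [maternForm_error_eq_add hdet x v]

lemma maternForm_krigingWeight_le (hα : 0 < α) {y : Fin n → Fin d → ℝ}
    (hdet : IsUnit (maternMat α d y).det) (x : Fin d → ℝ) :
    maternForm α d y (krigingWeight α d y x) ≤ matern α d 0 := by
  have h := maternForm_nonneg hα (errorNodes x y) (errorCoeffs (krigingWeight α d y x))
  rw [maternForm_error, maternForm_eq_dotProduct, maternMat_mulVec_krigingWeight hdet] at h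
  rw [maternForm_eq_dotProduct, maternMat_mulVec_krigingWeight hdet]
  linarith

end Kriging

/-! ### Polynomials on the unit cube -/

section Polynomials

variable {d l : ℕ}

/-- Multi-indices of total degree at most `l`. -/
def multiIdx (d l : ℕ) : Finset (Fin d → ℕ) :=
  (Finset.range (l + 1)).biUnion fun n => Finset.univ.piAntidiag n

/-- The monomial `y^k`. -/
def monom {d : ℕ} (y : Fin d → ℝ) (k : Fin d → ℕ) : ℝ := ∏ j, y j ^ k j

/-- The polynomial function of degree at most `l` with coefficient vector `a`. -/
def polyFun {d l : ℕ} (a : multiIdx d l → ℝ) (y : Fin d → ℝ) : ℝ := ∑ k, a k * monom y k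

/-- The polynomial of degree at most `l` with coefficient vector `a`. -/
def polyOfCoeffs {d l : ℕ} (a : multiIdx d l → ℝ) : MvPolynomial (Fin d) ℝ :=
  ∑ k : multiIdx d l, MvPolynomial.monomial (Finsupp.equivFunOnFinite.symm k.1) (a k)

/-- The map sending a coefficient vector to the values of the polynomial at the points `w`. -/
def polyEval {d l n : ℕ} (w : Fin n → Fin d → ℝ) : (multiIdx d l → ℝ) →ₗ[ℝ] (Fin n → ℝ) where
  toFun a i := polyFun a (w i)
  map_add' a b := by ext i; simp [polyFun, add_mul, Finset.sum_add_distrib]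
  map_smul' r a := by ext i; simp [polyFun, Finset.mul_sum, mul_assoc]

lemma mem_multiIdx {k : Fin d → ℕ} : k ∈ multiIdx d l ↔ ∑ j, k j ≤ l := by
  simp [multiIdx]

lemma pairwiseDisjoint_piAntidiag (d : ℕ) (s : Set ℕ) :
    s.PairwiseDisjoint fun n => (Finset.univ : Finset (Fin d)).piAntidiag n := by
  refine fun a _ b _ hab => Finset.disjoint_left.2 fun k hk hk' => hab ?_
  rw [← (Finset.mem_piAntidiag.1 hk).1, ← (Finset.mem_piAntidiag.1 hk').1]

lemma card_multiIdx (d l : ℕ) : (multiIdx d l).card = (l + d).choose l := by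
  rw [multiIdx, Finset.card_biUnion fun a ha b hb => pairwiseDisjoint_piAntidiag d _ ha hb]
  simp_rw [← Finset.map_sym_eq_piAntidiag, Finset.card_map, Finset.sym_univ, Finset.card_univ,
    Sym.card_sym_eq_multichoose, Fintype.card_fin]
  rw [Nat.sum_range_multichoose, Nat.choose_symm_add]

lemma continuous_polyFun :
    Continuous fun p : (multiIdx d l → ℝ) × (Fin d → ℝ) => polyFun p.1 p.2 := by
  unfold polyFun monom; fun_prop

lemma monom_smul (r : ℝ) (y : Fin d → ℝ) (k : Fin d → ℕ) :
    monom (r • y) k = r ^ (∑ j, k j) * monom y k := by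
  simp [monom, mul_pow, Finset.prod_mul_distrib, Finset.prod_pow_eq_pow_sum]

lemma polyFun_single (k : multiIdx d l) (y : Fin d → ℝ) :
    polyFun (Pi.single k 1) y = monom y k := by
  simp only [polyFun, Pi.single_apply, ite_mul, one_mul, zero_mul, Finset.sum_ite_eq',
    Finset.mem_univ, if_true]

lemma eval_polyOfCoeffs (a : multiIdx d l → ℝ) (y : Fin d → ℝ) :
    MvPolynomial.eval y (polyOfCoeffs a) = polyFun a y := by
  simp only [polyOfCoeffs, map_sum, polyFun, monom, MvPolynomial.eval_monomial]
  refine Finset.sum_congr rfl fun k _ => ?_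
  rw [Finsupp.prod_fintype _ _ (by simp)]
  rfl

lemma totalDegree_polyOfCoeffs_le (a : multiIdx d l → ℝ) : (polyOfCoeffs a).totalDegree ≤ l := by
  refine MvPolynomial.totalDegree_finsetSum_le fun k _ => ?_
  refine (MvPolynomial.totalDegree_monomial_le _ _).trans ?_
  rw [Finsupp.sum_fintype _ _ (by simp)]
  exact mem_multiIdx.1 k.2

lemma polyOfCoeffs_injective : Function.Injective (polyOfCoeffs (d := d) (l := l)) := by
  have hcoeff (a : multiIdx d l → ℝ) (k : multiIdx d l) :
      (polyOfCoeffs a).coeff (Finsupp.equivFunOnFinite.symm k.1) = a k := by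
    simp [polyOfCoeffs, MvPolynomial.coeff_sum, MvPolynomial.coeff_monomial,
      Subtype.val_injective.eq_iff]
  exact fun a b hab => funext fun k => by rw [← hcoeff a, hab, hcoeff]

lemma exists_polyFun_ne_zero {a : multiIdx d l → ℝ} (ha : a ≠ 0) :
    ∃ y ∈ Set.univ.pi fun _ : Fin d => Set.Ioo (0 : ℝ) 1, polyFun a y ≠ 0 := by
  by_contra! h
  refine ha (polyOfCoeffs_injective ?_)
  refine MvPolynomial.funext_set (fun _ => Set.Ioo (0 : ℝ) 1)
    (fun _ => Set.Ioo_infinite one_pos) fun y hy => ?_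
  rw [eval_polyOfCoeffs, h y hy, eval_polyOfCoeffs]
  simp [polyFun]

lemma integral_polyFun_sq_pos {a : multiIdx d l → ℝ} (ha : a ≠ 0) :
    0 < ∫ y in Set.Icc (0 : Fin d → ℝ) 1, polyFun a y ^ 2 := by
  obtain ⟨y, hy, hne⟩ := exists_polyFun_ne_zero ha
  have hc : Continuous fun y => polyFun a y ^ 2 :=
    (continuous_polyFun.comp (Continuous.prodMk_right a)).pow 2
  rw [setIntegral_pos_iff_support_of_nonneg_ae (.of_forall fun y => sq_nonneg _)
    (hc.continuousOn.integrableOn_compact isCompact_Icc)]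
  have ho : IsOpen (Function.support (fun y => polyFun a y ^ 2) ∩
      Set.univ.pi fun _ : Fin d => Set.Ioo (0 : ℝ) 1) :=
    hc.isOpen_support.inter (isOpen_set_pi Set.finite_univ fun _ _ => isOpen_Ioo)
  refine (ho.measure_pos volume ⟨y, by simpa using hne, hy⟩).trans_le (measure_mono ?_)
  refine Set.inter_subset_inter_right _ fun z hz => ?_
  exact ⟨fun t => (hz t trivial).1.le, fun t => (hz t trivial).2.le⟩

lemma integral_polyFun_smul_sq (r : ℝ) (a : multiIdx d l → ℝ) :
    ∫ y in Set.Icc (0 : Fin d → ℝ) 1, polyFun (r • a) y ^ 2 =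
      r ^ 2 * ∫ y in Set.Icc (0 : Fin d → ℝ) 1, polyFun a y ^ 2 := by
  rw [← integral_const_mul]
  congr 1 with y
  simp [← mul_pow, polyFun, Finset.mul_sum, mul_assoc]

lemma exists_coeff_sq_le_integral (d l : ℕ) :
    ∃ κ > 0, ∀ (a : multiIdx d l → ℝ) (k : multiIdx d l),
      κ * a k ^ 2 ≤ ∫ y in Set.Icc (0 : Fin d → ℝ) 1, polyFun a y ^ 2 := by
  set Φ : (multiIdx d l → ℝ) → ℝ := fun a => ∫ y in Set.Icc (0 : Fin d → ℝ) 1, polyFun a y ^ 2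
  have hcont : Continuous Φ := continuous_parametric_integral_of_continuous
    (f := fun a y => polyFun a y ^ 2) (continuous_polyFun.pow 2) isCompact_Icc
  have : Nonempty (multiIdx d l) := ⟨⟨0, by simp [mem_multiIdx]⟩⟩
  obtain ⟨a₀, ha₀, hmin⟩ := (isCompact_sphere (0 : multiIdx d l → ℝ) 1).exists_isMinOn
    (NormedSpace.sphere_nonempty.2 zero_le_one) hcont.continuousOn
  have ha₀0 : a₀ ≠ 0 := by rintro rfl; simp at ha₀
  have hpos : 0 < Φ a₀ := integral_polyFun_sq_pos ha₀0
  refine ⟨Φ a₀, hpos, fun a k => ?_⟩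
  obtain rfl | ha := eq_or_ne a 0
  · simp [polyFun]
  have hnorm : 0 < ‖a‖ := norm_pos_iff.2 ha
  have h1 : Φ a₀ ≤ ‖a‖⁻¹ ^ 2 * Φ a :=
    (hmin (by simp [norm_smul, hnorm.ne'])).trans_eq (integral_polyFun_smul_sq _ a)
  have h2 : a k ^ 2 ≤ ‖a‖ ^ 2 := sq_le_sq' (neg_le_of_abs_le (norm_le_pi_norm a k))
    (le_of_abs_le (norm_le_pi_norm a k))
  calc Φ a₀ * a k ^ 2 ≤ (‖a‖⁻¹ ^ 2 * Φ a) * ‖a‖ ^ 2 := by gcongr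
    _ = Φ a := by field_simp

lemma exists_abs_coeff_le (d l : ℕ) :
    ∃ B > 0, ∀ (a : multiIdx d l → ℝ) (M : ℝ),
      (∀ y ∈ Set.Icc (0 : Fin d → ℝ) 1, |polyFun a y| ≤ M) → ∀ k, |a k| ≤ B * M := by
  obtain ⟨κ, hκ, hcoeff⟩ := exists_coeff_sq_le_integral d l
  refine ⟨(√κ)⁻¹, by positivity, fun a M hM k => ?_⟩
  have hM0 : 0 ≤ M := (abs_nonneg _).trans (hM 0 ⟨le_rfl, zero_le_one⟩)
  have hint : ∫ y in Set.Icc (0 : Fin d → ℝ) 1, polyFun a y ^ 2 ≤ M ^ 2 := by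
    have h := norm_setIntegral_le_of_norm_le_const (μ := volume) (C := M ^ 2)
      (f := fun y => polyFun a y ^ 2) (isCompact_Icc (a := (0 : Fin d → ℝ)) (b := 1)).measure_lt_top
      fun y hy => by rw [norm_pow]; exact pow_le_pow_left₀ (norm_nonneg _) (hM y hy) 2
    refine (le_abs_self _).trans (h.trans_eq ?_)
    simp [Measure.real, Real.volume_Icc_pi]
  rw [inv_mul_eq_div, le_div_iff₀ (Real.sqrt_pos.2 hκ)]
  refine (le_abs_self _).trans (abs_le_of_sq_le_sq ?_ hM0)
  rw [mul_pow, Real.sq_sqrt hκ.le, sq_abs, mul_comm]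
  exact (hcoeff a k).trans hint

end Polynomials

/-! ### Norming sets -/

section Norming

variable {d l n : ℕ} {c : ℝ}

/-- The moment `∑ᵢ cᵢ wᵢ^k`. -/
def moment {d : ℕ} {ι : Type*} [Fintype ι] (w : ι → Fin d → ℝ) (c : ι → ℝ) (k : Fin d → ℕ) : ℝ :=
  ∑ i, c i * monom (w i) k

lemma moment_smul {ι : Type*} [Fintype ι] (r : ℝ) (w : ι → Fin d → ℝ) (c : ι → ℝ)
    (k : Fin d → ℕ) : moment (r • w) c k = r ^ (∑ j, k j) * moment w c k := by
  simp only [moment, Pi.smul_apply, monom_smul, Finset.mul_sum, mul_left_comm]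

lemma sum_mul_polyFun {ι : Type*} [Fintype ι] (w : ι → Fin d → ℝ) (c : ι → ℝ)
    (a : multiIdx d l → ℝ) : ∑ i, c i * polyFun a (w i) = ∑ k, a k * moment w c k := by
  simp only [polyFun, moment, Finset.mul_sum]
  rw [Finset.sum_comm]
  exact Finset.sum_congr rfl fun k _ => Finset.sum_congr rfl fun i _ => by ring

lemma totalDegree_aeval_le {σ τ R : Type*} [CommSemiring R] {f : σ → MvPolynomial τ R}
    (hf : ∀ j, (f j).totalDegree ≤ 1) (P : MvPolynomial σ R) :
    (MvPolynomial.aeval f P).totalDegree ≤ P.totalDegree := by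
  rw [MvPolynomial.aeval_def, MvPolynomial.eval₂_eq]
  refine MvPolynomial.totalDegree_finsetSum_le fun k hk => ?_
  refine (MvPolynomial.totalDegree_mul _ _).trans ?_
  rw [MvPolynomial.algebraMap_eq, MvPolynomial.totalDegree_C, zero_add]
  refine (MvPolynomial.totalDegree_finsetProd _ _).trans (le_trans ?_
    (MvPolynomial.le_totalDegree hk))
  exact Finset.sum_le_sum fun j _ =>
    (MvPolynomial.totalDegree_pow _ _).trans (mul_le_of_le_one_right (Nat.zero_le _) (hf j))

lemma IsNorming.of_cube {z : Fin d → ℝ} {s : ℝ} (hs : 0 < s) {y : Fin n → Fin d → ℝ}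
    (h : IsNorming l (cube d z s) (fun i => z + s • y i) c) : IsNorming l (Set.Icc 0 1) y c := by
  intro P hP p hp
  set f : Fin d → MvPolynomial (Fin d) ℝ :=
    fun j => MvPolynomial.C s⁻¹ * (MvPolynomial.X j - MvPolynomial.C (z j)) with hf
  have hdeg (j) : (f j).totalDegree ≤ 1 := by
    refine (MvPolynomial.totalDegree_mul _ _).trans ?_
    rw [MvPolynomial.totalDegree_C, zero_add]
    exact (MvPolynomial.totalDegree_sub_C_le _ _).trans (MvPolynomial.totalDegree_X _).le
  have heval (x : Fin d → ℝ) :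
      MvPolynomial.eval (z + s • x) (MvPolynomial.aeval f P) = MvPolynomial.eval x P := by
    have hx (j) : MvPolynomial.eval (z + s • x) (f j) = x j := by simp [hf, hs.ne']
    simp only [MvPolynomial.aeval_def, MvPolynomial.eval₂_eq, MvPolynomial.algebraMap_eq, map_sum,
      map_mul, map_prod, map_pow, MvPolynomial.eval_C, hx]
    rw [MvPolynomial.eval_eq]
  have hmem : z + s • p ∈ cube d z s := fun t =>
    ⟨le_add_of_nonneg_right (mul_nonneg hs.le (hp.1 t)),
      add_le_add_right (mul_le_of_le_one_right hs.le (hp.2 t)) _⟩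
  simpa only [heval] using h _ ((totalDegree_aeval_le hdeg P).trans hP) _ hmem

lemma IsNorming.abs_polyFun_le {Ω : Set (Fin d → ℝ)} {w : Fin n → Fin d → ℝ}
    (h : IsNorming l Ω w c) (hc : 0 ≤ c) {a : multiIdx d l → ℝ} {M : ℝ} (hM : 0 ≤ M)
    (ha : ∀ i, |polyEval w a i| ≤ M) {y : Fin d → ℝ} (hy : y ∈ Ω) : |polyFun a y| ≤ c * M := by
  have h' := h (polyOfCoeffs a) (totalDegree_polyOfCoeffs_le a) y hy
  simp only [eval_polyOfCoeffs] at h'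
  exact h'.trans (mul_le_mul_of_nonneg_left (Real.iSup_le ha hM) hc)

/- A polynomial vanishing on a norming set vanishes on the cube, hence identically. -/
lemma IsNorming.polyEval_injective {w : Fin n → Fin d → ℝ} (h : IsNorming l (Set.Icc 0 1) w c)
    (hc : 0 ≤ c) : Function.Injective (polyEval (l := l) w) := by
  obtain ⟨B, -, hB⟩ := exists_abs_coeff_le d l
  refine (injective_iff_map_eq_zero _).2 fun a ha => funext fun k => ?_
  have h0 : |a k| ≤ B * (c * 0) := hB a _ (fun y hy =>
    h.abs_polyFun_le hc le_rfl (fun i => by simp [ha]) hy) k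
  simpa using h0

/-- The coefficient vector of the Lagrange polynomial of the node `w i`. It is only meaningful when
the nodes `w` are unisolvent: otherwise `Function.invFun` returns an arbitrary vector. -/
def lagrangeCoeffs {d l n : ℕ} (w : Fin n → Fin d → ℝ) (i : Fin n) : multiIdx d l → ℝ :=
  Function.invFun (polyEval w) (Pi.single i 1)

lemma IsNorming.polyEval_lagrangeCoeffs {w : Fin n → Fin d → ℝ}
    (h : IsNorming l (Set.Icc 0 1) w c) (hc : 0 ≤ c) (hn : n = (multiIdx d l).card) (i : Fin n) :
    polyEval w (lagrangeCoeffs (l := l) w i) = Pi.single i 1 :=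
  Function.invFun_eq <| (LinearMap.injective_iff_surjective_of_finrank_eq_finrank
    (f := polyEval (l := l) w) (by simp [hn])).1 (h.polyEval_injective hc) _

lemma IsNorming.abs_polyFun_lagrangeCoeffs_le {w : Fin n → Fin d → ℝ}
    (h : IsNorming l (Set.Icc 0 1) w c) (hc : 0 ≤ c) (hn : n = (multiIdx d l).card) (i : Fin n)
    {p : Fin d → ℝ} (hp : p ∈ Set.Icc 0 1) : |polyFun (lagrangeCoeffs (l := l) w i) p| ≤ c := by
  refine (h.abs_polyFun_le hc zero_le_one (fun j => ?_) hp).trans_eq (mul_one c)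
  rw [h.polyEval_lagrangeCoeffs hc hn, Pi.single_apply]
  split_ifs <;> simp

/- Evaluating the Lagrange polynomials at `p` gives the rule that reproduces polynomials at `p`. -/
lemma IsNorming.exists_moment_eq_monom {w : Fin n → Fin d → ℝ}
    (h : IsNorming l (Set.Icc 0 1) w c) (hc : 0 ≤ c) (hn : n = (multiIdx d l).card)
    {p : Fin d → ℝ} (hp : p ∈ Set.Icc 0 1) :
    ∃ v : Fin n → ℝ, (∀ i, |v i| ≤ c) ∧ ∀ k ∈ multiIdx d l, moment w v k = monom p k := by
  refine ⟨fun i => polyFun (lagrangeCoeffs (l := l) w i) p,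
    fun i => h.abs_polyFun_lagrangeCoeffs_le hc hn i hp, fun k hk => ?_⟩
  set b : multiIdx d l → ℝ := ∑ i, monom (w i) k • lagrangeCoeffs w i with hb
  have hbk : b = Pi.single ⟨k, hk⟩ 1 := h.polyEval_injective hc <| by
    rw [hb, map_sum]
    simp only [map_smul, h.polyEval_lagrangeCoeffs hc hn]
    ext i
    simp [polyEval, polyFun_single, Pi.single_apply]
  rw [← polyFun_single ⟨k, hk⟩, ← hbk, moment]
  simp only [hb, polyFun, Finset.sum_apply, Pi.smul_apply, smul_eq_mul, Finset.sum_mul]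
  rw [Finset.sum_comm]
  exact Finset.sum_congr rfl fun k _ => Finset.sum_congr rfl fun i _ => by ring

lemma IsNorming.sum_lagrangeCoeffs_mul_moment {w : Fin n → Fin d → ℝ}
    (h : IsNorming l (Set.Icc 0 1) w c) (hc : 0 ≤ c) (hn : n = (multiIdx d l).card)
    (b : Fin n → ℝ) (i : Fin n) :
    ∑ k, lagrangeCoeffs w i k * moment w b (k : multiIdx d l) = b i := by
  have hw (j) : polyFun (lagrangeCoeffs (l := l) w i) (w j) = (Pi.single i 1 : Fin n → ℝ) j :=
    congrFun (h.polyEval_lagrangeCoeffs hc hn i) j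
  rw [← sum_mul_polyFun]
  simp only [hw, Pi.single_apply, mul_ite, mul_one, mul_zero, Finset.sum_ite_eq', Finset.mem_univ,
    if_true]

lemma exists_abs_le_of_abs_moment_le (d l : ℕ) {c : ℝ} (hc : 0 ≤ c) :
    ∃ B > 0, ∀ {n : ℕ}, n = (multiIdx d l).card → ∀ w : Fin n → Fin d → ℝ,
      IsNorming l (Set.Icc 0 1) w c → ∀ θ ∈ Set.Icc (0 : ℝ) 1, ∀ (b : Fin n → ℝ) (A : ℝ),
        (∀ k ∈ multiIdx d l, |moment (θ • w) b k| ≤ A) → ∀ i, θ ^ l * |b i| ≤ B * A := by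
  obtain ⟨B, hB, hcoeff⟩ := exists_abs_coeff_le d l
  refine ⟨(multiIdx d l).card * (B * c) + 1, by positivity, fun hn w hw θ hθ b A hA i => ?_⟩
  have hA0 : 0 ≤ A := (abs_nonneg _).trans (hA 0 (by simp [mem_multiIdx]))
  have hlag (k : multiIdx d l) : |lagrangeCoeffs w i k| ≤ B * c :=
    hcoeff _ _ (fun y hy => hw.abs_polyFun_lagrangeCoeffs_le hc hn i hy) k
  have hmom (k : multiIdx d l) : θ ^ l * |moment w b k| ≤ A := by
    refine le_trans ?_ (hA k k.2)
    rw [moment_smul, abs_mul, abs_of_nonneg (pow_nonneg hθ.1 _)]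
    exact mul_le_mul_of_nonneg_right
      (pow_le_pow_of_le_one hθ.1 hθ.2 (mem_multiIdx.1 k.2)) (abs_nonneg _)
  have hθl : 0 ≤ θ ^ l := pow_nonneg hθ.1 l
  calc θ ^ l * |b i| = θ ^ l * |∑ k, lagrangeCoeffs w i k * moment w b (k : multiIdx d l)| := by
        rw [hw.sum_lagrangeCoeffs_mul_moment hc hn]
    _ ≤ θ ^ l * ∑ k, |lagrangeCoeffs w i k| * |moment w b (k : multiIdx d l)| := by
        gcongr
        exact (Finset.abs_sum_le_sum_abs _ _).trans_eq (by simp only [abs_mul])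
    _ = ∑ k, |lagrangeCoeffs w i k| * (θ ^ l * |moment w b (k : multiIdx d l)|) := by
        rw [Finset.mul_sum]
        exact Finset.sum_congr rfl fun k _ => by ring
    _ ≤ ∑ _k : multiIdx d l, B * c * A := Finset.sum_le_sum fun k _ =>
        mul_le_mul (hlag k) (hmom k) (by positivity) (by positivity)
    _ ≤ ((multiIdx d l).card * (B * c) + 1) * A := by
        simp only [Finset.sum_const, Finset.card_univ, Fintype.card_coe, nsmul_eq_mul]
        linarith

end Norming

/-! ### Coercivity at small scales -/

section LowFrequency

variable {α : ℝ} {d l : ℕ} {ι : Type*} [Fintype ι]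

/-- The coefficient `1/k!` of `x^k` in `exp (∑ⱼ xⱼ)`, written as `multinomial k / |k|!` to match the
multinomial theorem. -/
def expCoeff {d : ℕ} (k : Fin d → ℕ) : ℝ :=
  (Nat.multinomial Finset.univ k : ℝ) / (∑ j, k j).factorial

/-- The Taylor polynomial of degree `l` at the origin of `waveSum y b`. -/
def waveTaylor {d : ℕ} {ι : Type*} [Fintype ι] (l : ℕ) (y : ι → Fin d → ℝ) (b : ι → ℝ)
    (ξ : Fin d → ℝ) : ℂ :=
  ∑ k : multiIdx d l, ((expCoeff k.1 * moment y b k * monom ξ k : ℝ) : ℂ) * Complex.I ^ (∑ j, k.1 j)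

lemma inv_factorial_le_expCoeff (k : multiIdx d l) : (l.factorial : ℝ)⁻¹ ≤ expCoeff k.1 := by
  rw [expCoeff, inv_eq_one_div]
  gcongr
  · exact_mod_cast Nat.multinomial_pos _ _
  · exact mem_multiIdx.1 k.2

lemma sum_dotProduct_mul_I_pow_div_factorial (l : ℕ) (y ξ : Fin d → ℝ) :
    ∑ n ∈ Finset.range (l + 1), (((y ⬝ᵥ ξ : ℝ) : ℂ) * Complex.I) ^ n / n.factorial =
      ∑ k : multiIdx d l, ((expCoeff k.1 * monom y k * monom ξ k : ℝ) : ℂ) *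
        Complex.I ^ (∑ j, k.1 j) := by
  rw [Finset.sum_coe_sort (multiIdx d l) fun k =>
    ((expCoeff k * monom y k * monom ξ k : ℝ) : ℂ) * Complex.I ^ (∑ j, k j), multiIdx,
    Finset.sum_biUnion fun a ha b hb => pairwiseDisjoint_piAntidiag d _ ha hb]
  refine Finset.sum_congr rfl fun n _ => ?_
  rw [mul_pow, ← Complex.ofReal_pow, dotProduct, Finset.sum_pow_eq_sum_piAntidiag,
    Complex.ofReal_sum, Finset.sum_mul, Finset.sum_div]
  refine Finset.sum_congr rfl fun k hk => ?_
  simp only [expCoeff, monom, (Finset.mem_piAntidiag.1 hk).1, mul_pow, Finset.prod_mul_distrib]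
  push_cast
  ring

lemma waveTaylor_eq_sum (l : ℕ) (y : ι → Fin d → ℝ) (b : ι → ℝ) (ξ : Fin d → ℝ) :
    waveTaylor l y b ξ = ∑ i, (b i : ℂ) * ∑ n ∈ Finset.range (l + 1),
      (((y i ⬝ᵥ ξ : ℝ) : ℂ) * Complex.I) ^ n / n.factorial := by
  simp_rw [sum_dotProduct_mul_I_pow_div_factorial, Finset.mul_sum]
  rw [Finset.sum_comm]
  refine Finset.sum_congr rfl fun k _ => ?_
  simp only [moment]
  push_cast
  rw [Finset.mul_sum, Finset.sum_mul, Finset.sum_mul]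
  exact Finset.sum_congr rfl fun i _ => by ring

lemma norm_waveSum_sub_waveTaylor_le (l : ℕ) (y : ι → Fin d → ℝ) (b : ι → ℝ) {ξ : Fin d → ℝ}
    {T : ℝ} (hT : ∀ i, |y i ⬝ᵥ ξ| ≤ T) :
    ‖waveSum y b ξ - waveTaylor l y b ξ‖ ≤ (∑ i, |b i|) * (T ^ (l + 1) * Real.exp T) := by
  rw [waveTaylor_eq_sum, waveSum, ← Finset.sum_sub_distrib, Finset.sum_mul]
  refine (norm_sum_le _ _).trans (Finset.sum_le_sum fun i _ => ?_)
  rw [← mul_sub, norm_mul, Complex.norm_real, Real.norm_eq_abs]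
  refine mul_le_mul_of_nonneg_left ?_ (abs_nonneg _)
  refine (Complex.norm_exp_sub_sum_le_norm_mul_exp _ _).trans ?_
  rw [norm_mul, Complex.norm_I, mul_one, Complex.norm_real, Real.norm_eq_abs]
  have := hT i
  have : 0 ≤ T := (abs_nonneg _).trans this
  gcongr

lemma abs_dotProduct_le (y ξ : Fin d → ℝ) : |y ⬝ᵥ ξ| ≤ d * (‖y‖ * ‖ξ‖) := by
  refine (Finset.abs_sum_le_sum_abs _ _).trans ((Finset.sum_le_card_nsmul _ _ (‖y‖ * ‖ξ‖)
    fun t _ => ?_).trans_eq (by simp))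
  rw [abs_mul]
  exact mul_le_mul (norm_le_pi_norm y t) (norm_le_pi_norm ξ t) (abs_nonneg _) (norm_nonneg _)

lemma norm_le_one_of_mem_Icc {y : Fin d → ℝ} (hy : y ∈ Set.Icc 0 1) : ‖y‖ ≤ 1 :=
  (pi_norm_le_iff_of_nonneg zero_le_one).2 fun t => by
    rw [Real.norm_of_nonneg (hy.1 t)]; exact hy.2 t

lemma sq_re_one_sub_I_mul_le (z : ℂ) : ((1 - Complex.I) * z).re ^ 2 ≤ 2 * ‖z‖ ^ 2 := by
  have h : ((1 - Complex.I) * z).re = z.re + z.im := by simp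
  rw [h, Complex.sq_norm, Complex.normSq_apply]
  linarith [sq_nonneg (z.re - z.im)]

lemma sq_re_one_sub_I_mul_I_pow (n : ℕ) : ((1 - Complex.I) * Complex.I ^ n).re ^ 2 = 1 := by
  rw [← Nat.div_add_mod n 4, pow_add, pow_mul, Complex.I_pow_four, one_pow, one_mul]
  have : n % 4 < 4 := Nat.mod_lt _ (by norm_num)
  interval_cases n % 4 <;> simp [pow_succ]

/- Taking the real part of `(1 - i)` times the Taylor polynomial turns the powers of `i` into signs,
so that no coefficient is lost when passing to a real polynomial. -/
lemma exists_moment_sq_le_integral_waveTaylor (d l : ℕ) :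
    ∃ κ > (0 : ℝ), ∀ {ι : Type*} [Fintype ι] (y : ι → Fin d → ℝ) (b : ι → ℝ), ∀ k ∈ multiIdx d l,
      κ * moment y b k ^ 2 ≤ ∫ η in Set.Icc (0 : Fin d → ℝ) 1, ‖waveTaylor l y b η‖ ^ 2 := by
  obtain ⟨κ, hκ, hcoeff⟩ := exists_coeff_sq_le_integral d l
  refine ⟨κ / (2 * l.factorial ^ 2), by positivity, fun y b k hk => ?_⟩
  set a : multiIdx d l → ℝ := fun k => expCoeff k.1 * moment y b k *
    ((1 - Complex.I) * Complex.I ^ (∑ j, k.1 j)).re with ha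
  have hpoly (η : Fin d → ℝ) : polyFun a η = ((1 - Complex.I) * waveTaylor l y b η).re := by
    simp only [waveTaylor, polyFun, Finset.mul_sum, Complex.re_sum]
    refine Finset.sum_congr rfl fun k _ => ?_
    rw [mul_left_comm, Complex.re_ofReal_mul]
    ring
  have hak : moment y b k ^ 2 / l.factorial ^ 2 ≤ a ⟨k, hk⟩ ^ 2 := by
    simp only [ha]
    rw [mul_pow _ (Complex.re _), sq_re_one_sub_I_mul_I_pow, mul_one, mul_pow, div_eq_inv_mul,
      ← inv_pow]
    gcongr
    exact inv_factorial_le_expCoeff ⟨k, hk⟩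
  have hcont : Continuous (waveTaylor l y b) := by unfold waveTaylor monom; fun_prop
  have hint : ∫ η in Set.Icc (0 : Fin d → ℝ) 1, polyFun a η ^ 2 ≤
      2 * ∫ η in Set.Icc (0 : Fin d → ℝ) 1, ‖waveTaylor l y b η‖ ^ 2 := by
    rw [← integral_const_mul]
    refine setIntegral_mono_on ?_ ?_ measurableSet_Icc fun η _ => ?_
    · exact ((continuous_polyFun.comp (Continuous.prodMk_right a)).pow
        2).continuousOn.integrableOn_compact isCompact_Icc
    · exact (continuous_const.mul (hcont.norm.pow 2)).continuousOn.integrableOn_compact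
        isCompact_Icc
    · rw [hpoly]
      exact sq_re_one_sub_I_mul_le _
  calc κ / (2 * l.factorial ^ 2) * moment y b k ^ 2
      = κ * (moment y b k ^ 2 / l.factorial ^ 2) / 2 := by ring
    _ ≤ κ * a ⟨k, hk⟩ ^ 2 / 2 := by gcongr
    _ ≤ _ := by linarith [hcoeff a ⟨k, hk⟩]

lemma exists_norm_waveSum_sub_waveTaylor_le (d l : ℕ) {c : ℝ} (hc : 0 ≤ c) :
    ∃ C > (0 : ℝ), ∀ {n : ℕ}, n = (multiIdx d l).card → ∀ w : Fin n → Fin d → ℝ,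
      (∀ i, w i ∈ Set.Icc 0 1) → IsNorming l (Set.Icc 0 1) w c →
      ∀ θ ∈ Set.Icc (0 : ℝ) 1, ∀ (b : Fin n → ℝ) (A : ℝ),
        (∀ k ∈ multiIdx d l, |moment (θ • w) b k| ≤ A) → ∀ η ∈ Set.Icc (0 : Fin d → ℝ) 1,
          ‖waveSum (θ • w) b η - waveTaylor l (θ • w) b η‖ ≤ C * (θ * A) := by
  obtain ⟨B, hB, hcoeff⟩ := exists_abs_le_of_abs_moment_le d l hc
  refine ⟨(multiIdx d l).card * B * ((d : ℝ) ^ (l + 1) * Real.exp d) + 1, by positivity,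
    fun {n} hn w hw hN θ hθ b A hA η hη => ?_⟩
  have hθ0 : 0 ≤ θ := hθ.1
  have hA0 : 0 ≤ A := (abs_nonneg _).trans (hA 0 (by simp [mem_multiIdx]))
  have hphase (i : Fin n) : |(θ • w) i ⬝ᵥ η| ≤ d * θ := by
    refine (abs_dotProduct_le _ _).trans (mul_le_mul_of_nonneg_left ?_ (Nat.cast_nonneg d))
    rw [Pi.smul_apply, norm_smul, Real.norm_of_nonneg hθ0]
    exact (mul_le_of_le_one_right (by positivity) (norm_le_one_of_mem_Icc hη)).trans
      (mul_le_of_le_one_right hθ0 (norm_le_one_of_mem_Icc (hw i)))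
  have hsum : θ ^ l * ∑ i, |b i| ≤ (multiIdx d l).card * B * A := by
    rw [Finset.mul_sum]
    refine (Finset.sum_le_card_nsmul _ _ (B * A) fun i _ =>
      hcoeff hn w hN θ hθ b A hA i).trans_eq ?_
    simp [hn, mul_assoc]
  calc ‖waveSum (θ • w) b η - waveTaylor l (θ • w) b η‖
      ≤ (∑ i, |b i|) * ((d * θ) ^ (l + 1) * Real.exp (d * θ)) :=
        norm_waveSum_sub_waveTaylor_le l _ b hphase
    _ ≤ (∑ i, |b i|) * ((d * θ) ^ (l + 1) * Real.exp d) := by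
        gcongr
        exact mul_le_of_le_one_right (Nat.cast_nonneg d) hθ.2
    _ = (θ ^ l * ∑ i, |b i|) * ((d : ℝ) ^ (l + 1) * Real.exp d * θ) := by ring
    _ ≤ (multiIdx d l).card * B * A * ((d : ℝ) ^ (l + 1) * Real.exp d * θ) := by gcongr
    _ ≤ ((multiIdx d l).card * B * ((d : ℝ) ^ (l + 1) * Real.exp d) + 1) * (θ * A) := by
        linarith [mul_nonneg hθ0 hA0]

lemma integral_sq_norm_le_two_mul_add {f g : (Fin d → ℝ) → ℂ} (hf : Continuous f)
    (hg : Continuous g) {R : ℝ} (h : ∀ η ∈ Set.Icc (0 : Fin d → ℝ) 1, ‖g η - f η‖ ≤ R) :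
    ∫ η in Set.Icc (0 : Fin d → ℝ) 1, ‖f η‖ ^ 2 ≤
      2 * (∫ η in Set.Icc (0 : Fin d → ℝ) 1, ‖g η‖ ^ 2) + 2 * R ^ 2 := by
  have hint {F : (Fin d → ℝ) → ℝ} (hF : Continuous F) :
      IntegrableOn F (Set.Icc (0 : Fin d → ℝ) 1) :=
    hF.continuousOn.integrableOn_compact isCompact_Icc
  have hvol : (volume : Measure (Fin d → ℝ)).real (Set.Icc 0 1) = 1 := by
    simp [Measure.real, Real.volume_Icc_pi]
  calc ∫ η in Set.Icc (0 : Fin d → ℝ) 1, ‖f η‖ ^ 2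
      ≤ ∫ η in Set.Icc (0 : Fin d → ℝ) 1, (2 * ‖g η‖ ^ 2 + 2 * R ^ 2) := by
        refine setIntegral_mono_on (hint (by fun_prop)) (hint (by fun_prop)) measurableSet_Icc
          fun η hη => ?_
        have h1 : ‖f η‖ ≤ ‖g η‖ + R := (norm_le_norm_add_norm_sub _ _).trans
          (add_le_add_right (h η hη) _)
        nlinarith [norm_nonneg (f η), sq_nonneg (‖g η‖ - R)]
    _ = _ := by
        rw [integral_add (hint (by fun_prop)) (hint (by fun_prop)), integral_const_mul,
          setIntegral_const, hvol, one_smul]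

lemma exists_moment_sq_le_integral_waveSum (d l : ℕ) {c : ℝ} (hc : 0 ≤ c) :
    ∃ κ > (0 : ℝ), ∃ δ > (0 : ℝ), ∀ {n : ℕ}, n = (multiIdx d l).card → ∀ w : Fin n → Fin d → ℝ,
      (∀ i, w i ∈ Set.Icc 0 1) → IsNorming l (Set.Icc 0 1) w c →
      ∀ θ ∈ Set.Icc (0 : ℝ) δ, ∀ (b : Fin n → ℝ), ∀ k ∈ multiIdx d l,
        κ * moment (θ • w) b k ^ 2 ≤
          ∫ η in Set.Icc (0 : Fin d → ℝ) 1, ‖waveSum (θ • w) b η‖ ^ 2 := by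
  obtain ⟨κ, hκ, hmom⟩ := exists_moment_sq_le_integral_waveTaylor d l
  obtain ⟨C, hC, hrem⟩ := exists_norm_waveSum_sub_waveTaylor_le d l hc
  refine ⟨κ / 4, by positivity, min 1 (√κ / (2 * C)), by positivity,
    fun hn w hw hN θ hθ b k hk => ?_⟩
  obtain ⟨k₀, hk₀, hmax⟩ :=
    Finset.exists_max_image (multiIdx d l) (fun k => |moment (θ • w) b k|) ⟨k, hk⟩
  set A := |moment (θ • w) b k₀|
  have hrem' := hrem hn w hw hN θ ⟨hθ.1, hθ.2.trans (min_le_left _ _)⟩ b A hmax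
  have hcont : Continuous (waveTaylor l (θ • w) b) := by unfold waveTaylor monom; fun_prop
  have h1 := integral_sq_norm_le_two_mul_add hcont (continuous_waveSum _ b) hrem'
  have h2 : κ * A ^ 2 ≤ _ := (sq_abs (moment (θ • w) b k₀)) ▸ hmom (θ • w) b k₀ hk₀
  have hCθ : C * θ ≤ √κ / 2 := by
    calc C * θ ≤ C * (√κ / (2 * C)) := by gcongr; exact hθ.2.trans (min_le_right _ _)
      _ = √κ / 2 := by field_simp
  have h3 : (C * (θ * A)) ^ 2 ≤ κ / 4 * A ^ 2 := by
    have : 0 ≤ C * θ := mul_nonneg hC.le hθ.1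
    calc (C * (θ * A)) ^ 2 = (C * θ) ^ 2 * A ^ 2 := by ring
      _ ≤ (√κ / 2) ^ 2 * A ^ 2 := by gcongr
      _ = κ / 4 * A ^ 2 := by rw [div_pow, Real.sq_sqrt hκ.le]; norm_num
  have h4 : moment (θ • w) b k ^ 2 ≤ A ^ 2 := by
    rw [← sq_abs (moment _ _ k)]
    exact pow_le_pow_left₀ (abs_nonneg _) (hmax k hk) 2
  calc κ / 4 * moment (θ • w) b k ^ 2 ≤ κ / 4 * A ^ 2 := by gcongr
    _ ≤ _ := by linarith

lemma le_maternDensity_smul (hα : 0 < α) {r : ℝ} (hr : r ∈ Set.Icc (0 : ℝ) 1) {η : Fin d → ℝ}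
    (hη : η ∈ Set.Icc 0 1) :
    (1 + (d : ℝ)) ^ (-(α + (d : ℝ) / 2)) ≤ maternDensity α d (r • η) := by
  refine Real.rpow_le_rpow_of_nonpos (one_add_sum_sq_pos _) ?_ (neg_nonpos.2 (by positivity))
  refine add_le_add_right ((Finset.sum_le_card_nsmul _ _ 1 fun j _ => ?_).trans_eq (by simp)) _
  exact pow_le_one₀ (mul_nonneg hr.1 (hη.1 j)) (mul_le_one₀ hr.2 (hη.1 j) (hη.2 j))

open scoped Pointwise in
lemma integral_waveSum_smul_le_maternForm (hα : 0 < α) (y : ι → Fin d → ℝ) (b : ι → ℝ) {r : ℝ}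
    (hr : 0 < r) (hr1 : r ≤ 1) :
    (1 + (d : ℝ)) ^ (-(α + (d : ℝ) / 2)) * (r ^ d *
      ∫ η in Set.Icc (0 : Fin d → ℝ) 1, ‖waveSum (r • y) b η‖ ^ 2) ≤ maternForm α d y b := by
  have hscale : r ^ d * ∫ η in Set.Icc (0 : Fin d → ℝ) 1, ‖waveSum (r • y) b η‖ ^ 2 =
      ∫ ξ in r • Set.Icc (0 : Fin d → ℝ) 1, ‖waveSum y b ξ‖ ^ 2 := by
    simp only [waveSum_smul]
    rw [Measure.setIntegral_comp_smul_of_pos volume (fun ξ => ‖waveSum y b ξ‖ ^ 2) _ hr]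
    simp only [Module.finrank_fintype_fun_eq_card, Fintype.card_fin, smul_eq_mul]
    field_simp
  have hcomp : IsCompact (r • Set.Icc (0 : Fin d → ℝ) 1) := isCompact_Icc.smul r
  have hint := integrable_norm_waveSum_sq hα y b
  rw [hscale, maternForm_eq_integral hα, ← integral_const_mul]
  refine (setIntegral_mono_on ?_ hint.integrableOn hcomp.measurableSet fun ξ hξ => ?_).trans
    (setIntegral_le_integral hint (.of_forall fun ξ =>
      mul_nonneg (sq_nonneg _) (maternDensity_pos α ξ).le))
  · exact (continuous_const.mul ((continuous_waveSum y b).norm.pow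
      2)).continuousOn.integrableOn_compact hcomp
  · obtain ⟨η, hη, rfl⟩ := hξ
    rw [mul_comm]
    exact mul_le_mul_of_nonneg_left (le_maternDensity_smul hα ⟨hr.le, hr1⟩ hη) (sq_nonneg _)

lemma exists_moment_sq_le_maternForm_of_le (hα : 0 < α) (d l : ℕ) {c H : ℝ} (hc : 0 ≤ c)
    (hH : 0 < H) :
    ∃ κ > (0 : ℝ), ∀ {n : ℕ}, n = (multiIdx d l).card → ∀ w : Fin n → Fin d → ℝ,
      (∀ i, w i ∈ Set.Icc 0 1) → IsNorming l (Set.Icc 0 1) w c →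
      ∀ h ∈ Set.Icc (0 : ℝ) H, ∀ (b : Fin n → ℝ), ∀ k ∈ multiIdx d l,
        κ * moment (h • w) b k ^ 2 ≤ maternForm α d (h • w) b := by
  obtain ⟨κ, hκ, δ, hδ, hlow⟩ := exists_moment_sq_le_integral_waveSum d l hc
  set r := min 1 (δ / H)
  have hr : 0 < r := by positivity
  have hr1 : r ≤ 1 := min_le_left _ _
  set ρ : ℝ := (1 + (d : ℝ)) ^ (-(α + (d : ℝ) / 2))
  refine ⟨ρ * (r ^ d * (κ * (r ^ l) ^ 2)), by positivity, fun hn w hw hN h hh b k hk => ?_⟩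
  have hrh : r * h ∈ Set.Icc (0 : ℝ) δ := by
    refine ⟨mul_nonneg hr.le hh.1, ?_⟩
    calc r * h ≤ δ / H * H := by gcongr; exacts [hh.1, min_le_right _ _, hh.2]
      _ = δ := by field_simp
  have hpow : r ^ l ≤ r ^ (∑ j, k j) := pow_le_pow_of_le_one hr.le hr1 (mem_multiIdx.1 hk)
  calc ρ * (r ^ d * (κ * (r ^ l) ^ 2)) * moment (h • w) b k ^ 2
      = ρ * (r ^ d * (κ * ((r ^ l) ^ 2 * moment (h • w) b k ^ 2))) := by ring
    _ ≤ ρ * (r ^ d * (κ * ((r ^ (∑ j, k j)) ^ 2 * moment (h • w) b k ^ 2))) := by gcongr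
    _ = ρ * (r ^ d * (κ * moment ((r * h) • w) b k ^ 2)) := by
        rw [mul_smul, moment_smul r, mul_pow]
    _ ≤ ρ * (r ^ d * ∫ η in Set.Icc (0 : Fin d → ℝ) 1, ‖waveSum ((r * h) • w) b η‖ ^ 2) := by
        gcongr
        exact hlow hn w hw hN _ hrh b k hk
    _ ≤ maternForm α d (h • w) b := by
        rw [mul_smul]
        exact integral_waveSum_smul_le_maternForm hα _ b hr hr1

end LowFrequency

/-! ### Energy of functionals with vanishing moments -/

section HighFrequency

variable {α : ℝ} {d m : ℕ} {ι : Type*} [Fintype ι]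

/-- The logarithmic loss at scale `h` when the smoothness `α` is exactly the number `m` of vanishing
orders of a functional; equal to `1` otherwise. -/
def logFactor (α : ℝ) (m : ℕ) (h : ℝ) : ℝ := if α = m then 1 + Real.log (1 / h) else 1

/-- The radial integrand bounding the energy at scale `h` of a functional whose Fourier transform
vanishes to order `m` at the origin. -/
def radialEnergy (α : ℝ) (d m : ℕ) (h y : ℝ) : ℝ :=
  y ^ (d - 1) * (min 1 ((h * y) ^ (2 * m)) * (1 + y ^ 2) ^ (-(α + (d : ℝ) / 2)))

lemma log_one_div_nonneg {h : ℝ} (h0 : 0 < h) (h1 : h ≤ 1) : 0 ≤ Real.log (1 / h) :=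
  Real.log_nonneg (one_le_one_div h0 h1)

lemma one_le_logFactor (α : ℝ) (m : ℕ) {h : ℝ} (h0 : 0 < h) (h1 : h ≤ 1) :
    1 ≤ logFactor α m h := by
  unfold logFactor
  split_ifs
  · linarith [log_one_div_nonneg h0 h1]
  · exact le_rfl

lemma continuous_radialEnergy (α : ℝ) (d m : ℕ) (h : ℝ) : Continuous (radialEnergy α d m h) := by
  have : Continuous fun y : ℝ => (1 + y ^ 2) ^ (-(α + (d : ℝ) / 2)) :=
    Continuous.rpow_const (by fun_prop) fun y => Or.inl (by positivity)
  unfold radialEnergy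
  fun_prop

lemma pow_mul_one_add_sq_rpow_le (hα : 0 < α) (hd : 1 ≤ d) {y : ℝ} (hy : 0 < y) :
    y ^ (d - 1) * (1 + y ^ 2) ^ (-(α + (d : ℝ) / 2)) ≤ y ^ (-1 - 2 * α) := by
  calc y ^ (d - 1) * (1 + y ^ 2) ^ (-(α + (d : ℝ) / 2))
      ≤ y ^ (d - 1) * (y ^ 2) ^ (-(α + (d : ℝ) / 2)) := by
        refine mul_le_mul_of_nonneg_left ?_ (by positivity)
        exact Real.rpow_le_rpow_of_nonpos (by positivity) (by linarith)
          (neg_nonpos.2 (by positivity))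
    _ = y ^ ((d - 1 : ℕ) : ℝ) * y ^ (2 * -(α + (d : ℝ) / 2)) := by
        rw [Real.rpow_natCast, Real.rpow_mul hy.le, Real.rpow_two]
    _ = y ^ (-1 - 2 * α) := by
        rw [← Real.rpow_add hy, Nat.cast_sub hd]
        congr 1
        push_cast
        ring

lemma radialEnergy_le_rpow_of_le_one (hα : 0 < α) (hαm : α ≤ m) (d : ℕ) {h : ℝ} (h0 : 0 < h)
    (h1 : h ≤ 1) {y : ℝ} (hy0 : 0 ≤ y) (hy1 : y ≤ 1) : radialEnergy α d m h y ≤ h ^ (2 * α) := by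
  have hmin : min 1 ((h * y) ^ (2 * m)) ≤ h ^ (2 * α) := by
    calc min 1 ((h * y) ^ (2 * m)) ≤ (h * y) ^ (2 * m) := min_le_right _ _
      _ ≤ h ^ (2 * m) := by gcongr; exact mul_le_of_le_one_right h0.le hy1
      _ = h ^ (2 * (m : ℝ)) := by rw [← Real.rpow_natCast]; norm_cast
      _ ≤ h ^ (2 * α) := Real.rpow_le_rpow_of_exponent_ge h0 h1 (by gcongr)
  have hdens : (1 + y ^ 2) ^ (-(α + (d : ℝ) / 2)) ≤ 1 :=
    Real.rpow_le_one_of_one_le_of_nonpos (by nlinarith [sq_nonneg y])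
      (neg_nonpos.2 (by positivity))
  calc radialEnergy α d m h y ≤ 1 * (h ^ (2 * α) * 1) := by
        unfold radialEnergy
        gcongr
        exact pow_le_one₀ hy0 hy1
    _ = h ^ (2 * α) := by ring

lemma radialEnergy_le_pow_mul_rpow (hα : 0 < α) (hd : 1 ≤ d) (m : ℕ) {h : ℝ} (h0 : 0 < h) {y : ℝ}
    (hy : 0 < y) : radialEnergy α d m h y ≤ h ^ (2 * m) * y ^ (2 * m - 1 - 2 * α : ℝ) := by
  calc radialEnergy α d m h y
      ≤ y ^ (d - 1) * ((h * y) ^ (2 * m) * (1 + y ^ 2) ^ (-(α + (d : ℝ) / 2))) := by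
        unfold radialEnergy; gcongr; exact min_le_right _ _
    _ = (h * y) ^ (2 * m) * (y ^ (d - 1) * (1 + y ^ 2) ^ (-(α + (d : ℝ) / 2))) := by ring
    _ ≤ (h * y) ^ (2 * m) * y ^ (-1 - 2 * α) := by
        gcongr; exact pow_mul_one_add_sq_rpow_le hα hd hy
    _ = h ^ (2 * m) * (y ^ ((2 * m : ℕ) : ℝ) * y ^ (-1 - 2 * α)) := by
        rw [mul_pow, Real.rpow_natCast]; ring
    _ = h ^ (2 * m) * y ^ (2 * m - 1 - 2 * α : ℝ) := by
        rw [← Real.rpow_add hy]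
        push_cast
        ring_nf

lemma norm_radialEnergy_le_rpow (hα : 0 < α) (hd : 1 ≤ d) (m : ℕ) {h : ℝ} (h0 : 0 < h) {y : ℝ}
    (hy : 0 < y) : ‖radialEnergy α d m h y‖ ≤ y ^ (-1 - 2 * α) := by
  unfold radialEnergy
  rw [Real.norm_of_nonneg (by positivity)]
  refine le_trans ?_ (pow_mul_one_add_sq_rpow_le hα hd hy)
  gcongr
  exact mul_le_of_le_one_left (by positivity) (min_le_left _ _)

lemma integrableOn_Ioi_radialEnergy (hα : 0 < α) (hd : 1 ≤ d) (m : ℕ) {h : ℝ} (h0 : 0 < h) {a : ℝ}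
    (ha : 0 < a) : IntegrableOn (radialEnergy α d m h) (Set.Ioi a) :=
  Integrable.mono' (integrableOn_Ioi_rpow_of_lt (show -1 - 2 * α < -1 by linarith) ha)
    (continuous_radialEnergy α d m h).aestronglyMeasurable <|
    (ae_restrict_iff' measurableSet_Ioi).2 <| .of_forall fun _ hy =>
      norm_radialEnergy_le_rpow hα hd m h0 (ha.trans hy)

lemma setIntegral_Ioi_radialEnergy_le (hα : 0 < α) (hd : 1 ≤ d) (m : ℕ) {h : ℝ} (h0 : 0 < h) :
    ∫ y in Set.Ioi (1 / h), radialEnergy α d m h y ≤ h ^ (2 * α) * (1 / (2 * α)) := by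
  have hpos : 0 < 1 / h := by positivity
  refine (setIntegral_mono_on (integrableOn_Ioi_radialEnergy hα hd m h0 hpos)
    (integrableOn_Ioi_rpow_of_lt (show -1 - 2 * α < -1 by linarith) hpos) measurableSet_Ioi
    fun y hy => (Real.le_norm_self _).trans
      (norm_radialEnergy_le_rpow hα hd m h0 (hpos.trans hy))).trans_eq ?_
  rw [integral_Ioi_rpow_of_lt (by linarith) hpos, one_div, Real.inv_rpow h0.le,
    ← Real.rpow_neg h0.le, show -1 - 2 * α + 1 = -(2 * α) by ring, neg_neg]
  field_simp

lemma setIntegral_Ioc_zero_one_radialEnergy_le (hα : 0 < α) (hαm : α ≤ m) (d : ℕ) {h : ℝ}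
    (h0 : 0 < h) (h1 : h ≤ 1) :
    ∫ y in Set.Ioc 0 1, radialEnergy α d m h y ≤ h ^ (2 * α) := by
  refine (setIntegral_mono_on (continuous_radialEnergy α d m h).integrableOn_Ioc
    (integrableOn_const measure_Ioc_lt_top.ne) measurableSet_Ioc fun y hy =>
      radialEnergy_le_rpow_of_le_one hα hαm d h0 h1 hy.1.le hy.2).trans_eq ?_
  simp

lemma pow_mul_integral_rpow_of_lt (hαm : α < m) {h : ℝ} (h0 : 0 < h) :
    h ^ (2 * m) * ∫ y in (1 : ℝ)..1 / h, y ^ (2 * m - 1 - 2 * α : ℝ) ≤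
      h ^ (2 * α) * (1 / (2 * (m - α))) := by
  have : 0 < m - α := sub_pos.2 hαm
  rw [integral_rpow (Or.inl (by linarith)), Real.one_rpow, one_div, Real.inv_rpow h0.le,
    ← Real.rpow_neg h0.le, show (2 * m - 1 - 2 * α + 1 : ℝ) = 2 * (m - α) by ring, mul_div_assoc',
    mul_one_div, mul_sub, ← Real.rpow_natCast, ← Real.rpow_add h0,
    show ((2 * m : ℕ) : ℝ) + -(2 * (m - α)) = 2 * α by push_cast; ring]
  gcongr
  exact sub_le_self _ (by positivity)

lemma pow_mul_integral_rpow_of_eq (hαm : α = m) {h : ℝ} (h0 : 0 < h) :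
    h ^ (2 * m) * ∫ y in (1 : ℝ)..1 / h, y ^ (2 * m - 1 - 2 * α : ℝ) =
      h ^ (2 * α) * Real.log (1 / h) := by
  rw [show (2 * m - 1 - 2 * α : ℝ) = -1 by rw [hαm]; ring, ← Real.rpow_natCast]
  simp_rw [Real.rpow_neg_one]
  rw [integral_inv_of_pos one_pos (by positivity), div_one, hαm]
  norm_cast

lemma setIntegral_Ioc_radialEnergy_le (hα : 0 < α) (hd : 1 ≤ d) (m : ℕ) {h : ℝ} (h0 : 0 < h)
    (h1 : h ≤ 1) :
    ∫ y in Set.Ioc 1 (1 / h), radialEnergy α d m h y ≤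
      h ^ (2 * m) * ∫ y in (1 : ℝ)..1 / h, y ^ (2 * m - 1 - 2 * α : ℝ) := by
  rw [intervalIntegral.integral_of_le (one_le_one_div h0 h1), ← integral_const_mul]
  refine setIntegral_mono_on (continuous_radialEnergy α d m h).integrableOn_Ioc ?_
    measurableSet_Ioc fun y hy => radialEnergy_le_pow_mul_rpow hα hd m h0 (one_pos.trans hy.1)
  refine (ContinuousOn.integrableOn_Icc ?_).mono_set Set.Ioc_subset_Icc_self
  exact continuousOn_const.mul (continuousOn_id.rpow_const fun y hy =>
    Or.inl (one_pos.trans_le hy.1).ne')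

lemma exists_setIntegral_Ioc_radialEnergy_le (hα : 0 < α) (hαm : α ≤ m) (hd : 1 ≤ d) :
    ∃ C > (0 : ℝ), ∀ h : ℝ, 0 < h → h ≤ 1 → ∫ y in Set.Ioc 1 (1 / h), radialEnergy α d m h y ≤
      C * (h ^ (2 * α) * logFactor α m h) := by
  rcases hαm.lt_or_eq with hlt | heq
  · refine ⟨1 / (2 * (m - α)), by have := sub_pos.2 hlt; positivity, fun h h0 h1 => ?_⟩
    refine (setIntegral_Ioc_radialEnergy_le hα hd m h0 h1).trans
      ((pow_mul_integral_rpow_of_lt hlt h0).trans_eq ?_)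
    rw [logFactor, if_neg hlt.ne]
    ring
  · refine ⟨1, one_pos, fun h h0 h1 => ?_⟩
    refine (setIntegral_Ioc_radialEnergy_le hα hd m h0 h1).trans
      ((pow_mul_integral_rpow_of_eq heq h0).trans_le ?_)
    rw [logFactor, if_pos heq, one_mul]
    gcongr
    linarith

lemma exists_integral_radialEnergy_le (hα : 0 < α) (hαm : α ≤ m) (hd : 1 ≤ d) :
    ∃ C > (0 : ℝ), ∀ h : ℝ, 0 < h → h ≤ 1 → ∫ y in Set.Ioi (0 : ℝ), radialEnergy α d m h y ≤
      C * (h ^ (2 * α) * logFactor α m h) := by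
  obtain ⟨C, hC, hmid⟩ := exists_setIntegral_Ioc_radialEnergy_le hα hαm hd
  refine ⟨1 + C + 1 / (2 * α), by positivity, fun h h0 h1 => ?_⟩
  have hcont := continuous_radialEnergy α d m h
  have hsplit : ∫ y in Set.Ioi (0 : ℝ), radialEnergy α d m h y =
      (∫ y in Set.Ioc 0 1, radialEnergy α d m h y) +
        ((∫ y in Set.Ioc 1 (1 / h), radialEnergy α d m h y) +
          ∫ y in Set.Ioi (1 / h), radialEnergy α d m h y) := by
    rw [← setIntegral_union (Set.Ioc_disjoint_Ioi le_rfl) measurableSet_Ioi hcont.integrableOn_Ioc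
      (integrableOn_Ioi_radialEnergy hα hd m h0 (by positivity)),
      Set.Ioc_union_Ioi_eq_Ioi (one_le_one_div h0 h1),
      ← setIntegral_union (Set.Ioc_disjoint_Ioi le_rfl) measurableSet_Ioi hcont.integrableOn_Ioc
        (integrableOn_Ioi_radialEnergy hα hd m h0 one_pos), Set.Ioc_union_Ioi_eq_Ioi zero_le_one]
  have hlow := setIntegral_Ioc_zero_one_radialEnergy_le hα hαm d h0 h1
  have hhigh := setIntegral_Ioi_radialEnergy_le hα hd m h0
  have hlog := one_le_logFactor α m h0 h1
  calc ∫ y in Set.Ioi (0 : ℝ), radialEnergy α d m h y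
      ≤ h ^ (2 * α) * 1 + C * (h ^ (2 * α) * logFactor α m h) +
          1 / (2 * α) * (h ^ (2 * α) * 1) := by
        rw [hsplit]; linarith [hmid h h0 h1]
    _ ≤ h ^ (2 * α) * logFactor α m h + C * (h ^ (2 * α) * logFactor α m h) +
          1 / (2 * α) * (h ^ (2 * α) * logFactor α m h) := by gcongr
    _ = _ := by ring

lemma waveTaylor_eq_zero {l : ℕ} {y : ι → Fin d → ℝ} {b : ι → ℝ}
    (hmom : ∀ k ∈ multiIdx d l, moment y b k = 0) (ξ : Fin d → ℝ) : waveTaylor l y b ξ = 0 :=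
  Finset.sum_eq_zero fun k _ => by simp [hmom k.1 k.2]

lemma norm_waveSum_le_of_moment_eq_zero {l : ℕ} {y : ι → Fin d → ℝ} {b : ι → ℝ}
    (hy : ∀ i, y i ∈ Set.Icc 0 1) (hmom : ∀ k ∈ multiIdx d l, moment y b k = 0) {ξ : Fin d → ℝ}
    (hξ : ‖ξ‖ ≤ 1) :
    ‖waveSum y b ξ‖ ≤ (d : ℝ) ^ (l + 1) * Real.exp d * (∑ i, |b i|) * ‖ξ‖ ^ (l + 1) := by
  have hphase (i : ι) : |y i ⬝ᵥ ξ| ≤ d * ‖ξ‖ :=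
    (abs_dotProduct_le _ _).trans (mul_le_mul_of_nonneg_left
      (mul_le_of_le_one_left (norm_nonneg _) (norm_le_one_of_mem_Icc (hy i))) (Nat.cast_nonneg d))
  have htaylor := norm_waveSum_sub_waveTaylor_le l y b hphase
  rw [waveTaylor_eq_zero hmom, sub_zero] at htaylor
  calc ‖waveSum y b ξ‖ ≤ (∑ i, |b i|) * ((d * ‖ξ‖) ^ (l + 1) * Real.exp (d * ‖ξ‖)) := htaylor
    _ ≤ (∑ i, |b i|) * ((d * ‖ξ‖) ^ (l + 1) * Real.exp d) := by
        gcongr; exact mul_le_of_le_one_right (Nat.cast_nonneg d) hξ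
    _ = _ := by ring

lemma norm_waveSum_sq_le_mul_min {l : ℕ} (hd : 1 ≤ d) {y : ι → Fin d → ℝ} {b : ι → ℝ}
    (hy : ∀ i, y i ∈ Set.Icc 0 1) (hmom : ∀ k ∈ multiIdx d l, moment y b k = 0) (ξ : Fin d → ℝ) :
    ‖waveSum y b ξ‖ ^ 2 ≤
      ((d : ℝ) ^ (l + 1) * Real.exp d * ∑ i, |b i|) ^ 2 * min 1 (‖ξ‖ ^ (2 * (l + 1))) := by
  rcases le_or_gt ‖ξ‖ 1 with hξ | hξ
  · rw [min_eq_right (pow_le_one₀ (norm_nonneg _) hξ), mul_comm 2, pow_mul, ← mul_pow]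
    gcongr
    exact norm_waveSum_le_of_moment_eq_zero hy hmom hξ
  · rw [min_eq_left (one_le_pow₀ hξ.le), mul_one]
    gcongr
    refine (norm_waveSum_le y b ξ).trans (le_mul_of_one_le_left (by positivity) ?_)
    exact one_le_mul_of_one_le_of_one_le (one_le_pow₀ (by exact_mod_cast hd))
      (Real.one_le_exp (Nat.cast_nonneg d))

lemma integral_min_mul_eq_radialEnergy (hd : 1 ≤ d) (α : ℝ) (m : ℕ) (h : ℝ) :
    ∫ ξ : Fin d → ℝ, min 1 ((h * ‖ξ‖) ^ (2 * m)) * (1 + ‖ξ‖ ^ 2) ^ (-(α + (d : ℝ) / 2)) =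
      d * ((volume : Measure (Fin d → ℝ)).real (Metric.ball 0 1) *
        ∫ y in Set.Ioi (0 : ℝ), radialEnergy α d m h y) := by
  have : Nonempty (Fin d) := ⟨⟨0, hd⟩⟩
  rw [integral_fun_norm_addHaar (volume : Measure (Fin d → ℝ)) fun y : ℝ =>
    min 1 ((h * y) ^ (2 * m)) * (1 + y ^ 2) ^ (-(α + (d : ℝ) / 2))]
  simp only [Module.finrank_fintype_fun_eq_card, Fintype.card_fin, smul_eq_mul, nsmul_eq_mul,
    radialEnergy]

lemma maternForm_smul_le_integral {l : ℕ} (hα : 0 < α) (hd : 1 ≤ d) {y : ι → Fin d → ℝ} {b : ι → ℝ}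
    (hy : ∀ i, y i ∈ Set.Icc 0 1) (hmom : ∀ k ∈ multiIdx d l, moment y b k = 0) {h : ℝ}
    (h0 : 0 < h) :
    maternForm α d (h • y) b ≤ ((d : ℝ) ^ (l + 1) * Real.exp d * ∑ i, |b i|) ^ 2 *
      ∫ ξ : Fin d → ℝ, min 1 ((h * ‖ξ‖) ^ (2 * (l + 1))) *
        (1 + ‖ξ‖ ^ 2) ^ (-(α + (d : ℝ) / 2)) := by
  have hint : Integrable fun ξ : Fin d → ℝ => min 1 ((h * ‖ξ‖) ^ (2 * (l + 1))) *
      (1 + ‖ξ‖ ^ 2) ^ (-(α + (d : ℝ) / 2)) := by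
    refine (integrable_one_add_norm_sq_rpow hα d).bdd_mul (c := 1)
      (Continuous.aestronglyMeasurable (by fun_prop)) (.of_forall fun ξ => ?_)
    rw [Real.norm_of_nonneg (by positivity)]
    exact min_le_left _ _
  rw [maternForm_eq_integral hα, ← integral_const_mul]
  refine integral_mono (integrable_norm_waveSum_sq hα _ b) (hint.const_mul _) fun ξ => ?_
  have hpt := norm_waveSum_sq_le_mul_min hd hy hmom (h • ξ)
  rw [norm_smul, Real.norm_of_nonneg h0.le, ← waveSum_smul] at hpt
  rw [← mul_assoc]
  exact mul_le_mul hpt (maternDensity_le hα ξ) (maternDensity_pos α ξ).le (by positivity)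

lemma exists_maternForm_smul_le {l : ℕ} (hα : 0 < α) (hαl : α ≤ (l + 1 : ℕ)) (hd : 1 ≤ d) :
    ∃ C > (0 : ℝ), ∀ {ι : Type} [Fintype ι] (y : ι → Fin d → ℝ) (b : ι → ℝ),
      (∀ i, y i ∈ Set.Icc 0 1) → (∀ k ∈ multiIdx d l, moment y b k = 0) →
      ∀ h : ℝ, 0 < h → h ≤ 1 →
        maternForm α d (h • y) b ≤ (C * (∑ i, |b i|) * (h ^ α * logFactor α (l + 1) h)) ^ 2 := by
  obtain ⟨C, hC, hrad⟩ := exists_integral_radialEnergy_le hα hαl hd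
  set D : ℝ := (d : ℝ) ^ (l + 1) * Real.exp d
  set v : ℝ := (volume : Measure (Fin d → ℝ)).real (Metric.ball 0 1)
  have hv : 0 < v :=
    ENNReal.toReal_pos (Metric.measure_ball_pos _ _ one_pos).ne' measure_ball_lt_top.ne
  have : (0 : ℝ) < d := by exact_mod_cast hd
  refine ⟨D * √(d * (v * C)), by positivity, fun y b hy hmom h h0 h1 => ?_⟩
  have hlog := one_le_logFactor α (l + 1) h0 h1
  calc maternForm α d (h • y) b
      ≤ (D * ∑ i, |b i|) ^ 2 * (d * (v * (C * (h ^ (2 * α) * logFactor α (l + 1) h)))) := by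
        refine (maternForm_smul_le_integral hα hd hy hmom h0).trans ?_
        rw [integral_min_mul_eq_radialEnergy hd]
        gcongr
        exact hrad h h0 h1
    _ ≤ (D * ∑ i, |b i|) ^ 2 * (d * (v * (C * (h ^ (2 * α) * logFactor α (l + 1) h ^ 2)))) := by
        gcongr
        exact le_self_pow₀ hlog two_ne_zero
    _ = (D * ∑ i, |b i|) ^ 2 * √(d * (v * C)) ^ 2 * (h ^ α * logFactor α (l + 1) h) ^ 2 := by
        rw [Real.sq_sqrt (by positivity), mul_comm 2 α, Real.rpow_mul h0.le, Real.rpow_two]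
        ring
    _ = _ := by ring

end HighFrequency

/-! ### Coercivity at every scale -/

section Coercivity

variable {α : ℝ} {d n : ℕ}

lemma matern_eq_re_integral_fourierChar (hα : 0 < α) {y : Fin d → ℝ} {φ : (Fin d → ℝ) →L[ℝ] ℝ}
    (hφ : ∀ ξ, 2 * Real.pi * φ ξ = y ⬝ᵥ ξ) :
    matern α d y = (∫ ξ, Real.fourierChar (-(φ ξ)) • (maternDensity α d ξ : ℂ)).re := by
  have hint : Integrable fun ξ : Fin d → ℝ =>
      Real.fourierChar (-(φ ξ)) • (maternDensity α d ξ : ℂ) := by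
    refine ((integrable_maternDensity hα d).ofReal (𝕜 := ℂ)).mono
      (Continuous.aestronglyMeasurable ?_) (.of_forall fun ξ => by simp)
    have := Complex.continuous_ofReal.comp (continuous_maternDensity α d)
    fun_prop
  rw [← RCLike.re_to_complex, ← integral_re hint]
  refine integral_congr_ae (.of_forall fun ξ => ?_)
  simp only [RCLike.re_to_complex, Circle.smul_def, Real.fourierChar_apply, smul_eq_mul,
    Complex.re_mul_ofReal, Complex.exp_ofReal_mul_I_re, mul_neg, Real.cos_neg, hφ]
  rfl

lemma tendsto_matern_cocompact (hα : 0 < α) (d : ℕ) :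
    Filter.Tendsto (matern α d) (Filter.cocompact _) (nhds 0) := by
  set T : (Fin d → ℝ) ≃L[ℝ] StrongDual ℝ (Fin d → ℝ) :=
    ((dotProductEquiv ℝ (Fin d)).trans LinearMap.toContinuousLinearMap).toContinuousLinearEquiv
    with hT
  have hscale : (2 * Real.pi)⁻¹ ≠ 0 := by positivity
  have hcomp : Filter.Tendsto (fun y => T ((2 * Real.pi)⁻¹ • y)) (Filter.cocompact _)
      (Filter.cocompact _) :=
    ((Homeomorph.smulOfNeZero _ hscale).trans
      T.toHomeomorph).isClosedEmbedding.tendsto_cocompact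
  have hlim := (Complex.continuous_re.tendsto 0).comp ((tendsto_integral_exp_smul_cocompact
    (fun ξ : Fin d → ℝ => (maternDensity α d ξ : ℂ)) volume).comp hcomp)
  refine hlim.congr fun y => (matern_eq_re_integral_fourierChar hα fun ξ => ?_).symm
  simp only [hT, LinearEquiv.coe_toContinuousLinearEquiv', LinearEquiv.trans_apply,
    LinearMap.coe_toContinuousLinearMap', dotProductEquiv_apply_apply, smul_dotProduct,
    smul_eq_mul]
  field_simp

lemma exists_abs_matern_le (hα : 0 < α) (d : ℕ) {ε : ℝ} (hε : 0 < ε) :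
    ∃ R > (0 : ℝ), ∀ y : Fin d → ℝ, R ≤ ‖y‖ → |matern α d y| ≤ ε := by
  have hev := (tendsto_matern_cocompact hα d).eventually (Metric.closedBall_mem_nhds 0 hε)
  rw [← Metric.cobounded_eq_cocompact, ← comap_norm_atTop, Filter.eventually_comap] at hev
  obtain ⟨R, hR⟩ := Filter.eventually_atTop.1 hev
  refine ⟨max R 1, by positivity, fun y hy => ?_⟩
  simpa using hR ‖y‖ ((le_max_left _ _).trans hy) y rfl

lemma half_matern_zero_mul_sq_le_maternForm (hK : 0 ≤ matern α d 0) {y : Fin n → Fin d → ℝ}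
    (hoff : ∀ i j, i ≠ j → n * |matern α d (y i - y j)| ≤ matern α d 0 / 2) (b : Fin n → ℝ) :
    matern α d 0 / 2 * (∑ i, |b i|) ^ 2 ≤ n * maternForm α d y b := by
  have hcauchy : (∑ i, |b i|) ^ 2 ≤ n * ∑ i, b i ^ 2 := by
    simpa using sq_sum_le_card_mul_sum_sq (s := Finset.univ) (f := fun i => |b i|)
  have hterm (i j : Fin n) :
      n * (if i = j then matern α d 0 * b i ^ 2 else 0) - matern α d 0 / 2 * (|b i| * |b j|) ≤
        n * (b i * b j * matern α d (y i - y j)) := by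
    split_ifs with h
    · subst h
      rw [sub_self]
      nlinarith [mul_nonneg hK (mul_self_nonneg |b i|)]
    · have habs : |n * (b i * b j * matern α d (y i - y j))| ≤
          matern α d 0 / 2 * (|b i| * |b j|) := by
        rw [abs_mul, abs_mul, abs_mul, Nat.abs_cast, mul_left_comm, mul_comm]
        exact mul_le_mul_of_nonneg_right (hoff i j h) (by positivity)
      linarith [neg_abs_le (n * (b i * b j * matern α d (y i - y j)))]
  have hsum := Finset.sum_le_sum fun i (_ : i ∈ Finset.univ) =>
    Finset.sum_le_sum fun j (_ : j ∈ Finset.univ) => hterm i j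
  simp only [Finset.sum_sub_distrib, ← Finset.mul_sum, Finset.sum_ite_eq, Finset.mem_univ,
    if_true, ← Finset.sum_mul, ← sq] at hsum
  rw [← maternForm] at hsum
  linarith [mul_le_mul_of_nonneg_left hcauchy hK]

lemma abs_moment_le {ι : Type*} [Fintype ι] {w : ι → Fin d → ℝ} (hw : ∀ i, w i ∈ Set.Icc 0 1)
    (b : ι → ℝ) (k : Fin d → ℕ) : |moment w b k| ≤ ∑ i, |b i| := by
  refine (Finset.abs_sum_le_sum_abs _ _).trans (Finset.sum_le_sum fun i _ => ?_)
  rw [abs_mul, monom, abs_of_nonneg (Finset.prod_nonneg fun j _ => pow_nonneg ((hw i).1 j) _)]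
  exact mul_le_of_le_one_right (abs_nonneg _) (Finset.prod_le_one
    (fun j _ => pow_nonneg ((hw i).1 j) _) fun j _ => pow_le_one₀ ((hw i).1 j) ((hw i).2 j))

lemma exists_sq_sum_abs_le_maternForm (hα : 0 < α) (d : ℕ) {n : ℕ} (hn : 0 < n) {δ : ℝ}
    (hδ : 0 < δ) :
    ∃ κ > (0 : ℝ), ∃ H > (0 : ℝ), ∀ w : Fin n → Fin d → ℝ, (∀ i j, i ≠ j → δ ≤ ‖w i - w j‖) →
      ∀ h ≥ H, ∀ b, κ * (∑ i, |b i|) ^ 2 ≤ maternForm α d (h • w) b := by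
  have hK := matern_zero_pos hα d
  have hn0 : (0 : ℝ) < n := by exact_mod_cast hn
  obtain ⟨R, hR, hfar⟩ := exists_abs_matern_le hα d (ε := matern α d 0 / 2 / n) (by positivity)
  refine ⟨matern α d 0 / 2 / n, by positivity, R / δ, by positivity, fun w hsep h hh b => ?_⟩
  have h0 : 0 < h := (div_pos hR hδ).trans_le hh
  rw [div_mul_eq_mul_div, div_le_iff₀' hn0]
  refine half_matern_zero_mul_sq_le_maternForm hK.le (fun i j hij => ?_) b
  rw [← le_div_iff₀' hn0]
  refine hfar _ ?_
  rw [Pi.smul_apply, Pi.smul_apply, ← smul_sub, norm_smul, Real.norm_of_nonneg h0.le]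
  exact ((div_le_iff₀ hδ).1 hh).trans (mul_le_mul_of_nonneg_left (hsep i j hij) h0.le)

lemma exists_moment_sq_le_maternForm (hα : 0 < α) (d l : ℕ) {c δ : ℝ} (hc : 0 ≤ c) (hδ : 0 < δ) :
    ∃ κ > (0 : ℝ), ∀ {n : ℕ}, n = (multiIdx d l).card → ∀ w : Fin n → Fin d → ℝ,
      (∀ i, w i ∈ Set.Icc 0 1) → IsNorming l (Set.Icc 0 1) w c →
      (∀ i j, i ≠ j → δ ≤ ‖w i - w j‖) → ∀ h > (0 : ℝ), ∀ b : Fin n → ℝ, ∀ k ∈ multiIdx d l,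
        κ * moment (min h 1 • w) b k ^ 2 ≤ maternForm α d (h • w) b := by
  have hcard : 0 < (multiIdx d l).card := Finset.card_pos.2 ⟨0, by simp [mem_multiIdx]⟩
  obtain ⟨κ₁, hκ₁, H, hH, hfar⟩ := exists_sq_sum_abs_le_maternForm hα d hcard hδ
  obtain ⟨κ₂, hκ₂, hnear⟩ := exists_moment_sq_le_maternForm_of_le hα d l hc hH
  refine ⟨min κ₁ κ₂, by positivity, fun {n} hn w hw hN hsep h hh b k hk => ?_⟩
  have hmin : 0 ≤ min h 1 := by positivity
  rcases le_total h H with hle | hge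
  · refine le_trans ?_ (hnear hn w hw hN h ⟨hh.le, hle⟩ b k hk)
    rw [moment_smul, moment_smul, mul_pow, mul_pow]
    gcongr
    exacts [min_le_right _ _, min_le_left _ _]
  · subst hn
    refine le_trans ?_ (hfar w hsep h hge b)
    have habs : |moment (min h 1 • w) b k| ≤ ∑ i, |b i| := by
      rw [moment_smul, abs_mul, abs_of_nonneg (pow_nonneg hmin _)]
      exact (mul_le_of_le_one_left (abs_nonneg _) (pow_le_one₀ hmin (min_le_right _ _))).trans
        (abs_moment_le hw b k)
    rw [← sq_abs (moment _ _ _)]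
    gcongr
    exact min_le_left _ _

end Coercivity

/-! ### Taylor expansion of Hölder functions -/

section Lbelow

variable {α β : ℝ}

lemma lbelow_add_one (hα : 0 < α) : lbelow α + 1 = ⌈α⌉₊ :=
  Nat.sub_add_cancel (Nat.one_le_ceil_iff.2 hα)

lemma lbelow_lt (hα : 0 < α) : (lbelow α : ℝ) < α :=
  Nat.lt_ceil.1 (by rw [← lbelow_add_one hα]; exact Nat.lt_succ_self _)

lemma le_lbelow_add_one (hα : 0 < α) : α ≤ (lbelow α + 1 : ℕ) := by
  rw [lbelow_add_one hα]
  exact Nat.le_ceil α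

lemma isNatVal_iff (hα : 0 < α) : IsNatVal α ↔ α = (lbelow α + 1 : ℕ) := by
  refine ⟨?_, fun h => ⟨_, h⟩⟩
  rintro ⟨n, rfl⟩
  rw [lbelow_add_one hα, Nat.ceil_natCast]

lemma lbelow_mono (h : β ≤ α) : lbelow β ≤ lbelow α := Nat.sub_le_sub_right (Nat.ceil_mono h) 1

end Lbelow

section Taylor

variable {d : ℕ} {β : ℝ} {f : (Fin d → ℝ) → ℝ}

/-- The iterated partial derivative along a word of coordinate directions. -/
def wder {d : ℕ} (W : List (Fin d)) (f : (Fin d → ℝ) → ℝ) : (Fin d → ℝ) → ℝ :=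
  W.foldr (pder d) f

/-- The `n`-th derivative of `t ↦ f (z + t • v)` at `t = 0`, expanded over words of length `n`. -/
def dirDeriv {d : ℕ} (n : ℕ) (f : (Fin d → ℝ) → ℝ) (z v : Fin d → ℝ) : ℝ :=
  ∑ W : Fin n → Fin d, (∏ i, v (W i)) * wder (List.ofFn W) f z

/-- The Taylor polynomial of `f` of degree `n` at `z`, evaluated at `z + v`. -/
def taylorSum {d : ℕ} (n : ℕ) (f : (Fin d → ℝ) → ℝ) (z v : Fin d → ℝ) : ℝ :=
  ∑ q ∈ Finset.range (n + 1), (q.factorial : ℝ)⁻¹ * dirDeriv q f z v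

lemma wder_cons (j : Fin d) (W : List (Fin d)) (f : (Fin d → ℝ) → ℝ) :
    wder (j :: W) f = pder d j (wder W f) := rfl

lemma wder_append (W W' : List (Fin d)) (f : (Fin d → ℝ) → ℝ) :
    wder (W ++ W') f = wder W (wder W' f) := List.foldr_append

lemma wder_replicate (n : ℕ) (j : Fin d) (f : (Fin d → ℝ) → ℝ) :
    wder (List.replicate n j) f = (pder d j)^[n] f := by
  induction n with
  | zero => rfl
  | succ n ih => rw [List.replicate_succ, wder_cons, ih, Function.iterate_succ_apply']

lemma contDiff_pder {n : ℕ} (hf : ContDiff ℝ (n + 1 : ℕ) f) (j : Fin d) :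
    ContDiff ℝ n (pder d j f) :=
  (hf.fderiv_right (m := n) (by norm_cast)).clm_apply contDiff_const

lemma contDiff_wder (W : List (Fin d)) {n : ℕ} (hf : ContDiff ℝ (n + W.length : ℕ) f) :
    ContDiff ℝ n (wder W f) := by
  induction W generalizing n with
  | nil => exact hf
  | cons j W ih =>
    refine contDiff_pder (ih ?_) j
    rwa [List.length_cons, ← Nat.add_assoc, Nat.add_right_comm] at hf

lemma pder_comm (hf : ContDiff ℝ (2 : ℕ) f) (i j : Fin d) :
    pder d i (pder d j f) = pder d j (pder d i f) := by
  have hsecond (i j : Fin d) (x : Fin d → ℝ) : pder d i (pder d j f) x =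
      fderiv ℝ (fderiv ℝ f) x (Pi.single i 1) (Pi.single j 1) := by
    have hd : DifferentiableAt ℝ (fderiv ℝ f) x :=
      ((hf.fderiv_right (m := 1) (by norm_cast)).differentiable one_ne_zero) x
    have h := (hd.hasFDerivAt.clm_apply (hasFDerivAt_const (Pi.single j (1 : ℝ)) x)).fderiv
    unfold pder
    rw [h]
    simp
  funext x
  rw [hsecond, hsecond]
  exact (hf.contDiffAt.isSymmSndFDerivAt (by simp)) _ _

lemma wder_perm {W W' : List (Fin d)} (h : W.Perm W') (hf : ContDiff ℝ W.length f) :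
    wder W f = wder W' f := by
  induction h with
  | nil => rfl
  | cons j _ ih => rw [wder_cons, wder_cons, ih (hf.of_le (by simp))]
  | swap i j W =>
    refine pder_comm (contDiff_wder W ?_) _ _
    rwa [add_comm]
  | trans h₁ _ ih₁ ih₂ => rw [ih₁ hf, ih₂ (h₁.length_eq ▸ hf)]

lemma mder_eq_wder (k : Fin d → ℕ) (f : (Fin d → ℝ) → ℝ) :
    mder d k f = wder ((List.finRange d).flatMap fun j => List.replicate (k j) j) f := by
  unfold mder
  induction List.finRange d with
  | nil => rfl
  | cons j W ih => rw [List.foldr_cons, ih, List.flatMap_cons, wder_append, wder_replicate]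

lemma wder_eq_mder (W : List (Fin d)) (hf : ContDiff ℝ W.length f) :
    wder W f = mder d (fun j => W.count j) f := by
  rw [mder_eq_wder]
  refine wder_perm (List.perm_iff_count.2 fun j => ?_) hf
  have hcount : (List.count j ∘ fun i => List.replicate (W.count i) i) =
      fun i => if i = j then W.count j else 0 := by
    funext i
    simp only [Function.comp, List.count_replicate, beq_iff_eq]
    split_ifs with h <;> simp [h]
  rw [List.count_flatMap, hcount, ← List.ofFn_eq_map, List.sum_ofFn, Finset.sum_ite_eq',
    if_pos (Finset.mem_univ j)]

lemma sum_count_eq_length (W : List (Fin d)) : ∑ j, W.count j = W.length := by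
  simpa using Multiset.sum_count_eq_card (s := Finset.univ) (m := (W : Multiset (Fin d)))
    (by simp)

lemma prod_apply_eq_monom {n : ℕ} (W : Fin n → Fin d) (y : Fin d → ℝ) :
    ∏ i, y (W i) = monom y fun j => (List.ofFn W).count j := by
  rw [← List.prod_ofFn, show (fun i => y (W i)) = y ∘ W from rfl, ← List.map_ofFn,
    Finset.prod_list_map_count]
  exact Finset.prod_subset (Finset.subset_univ _) fun j _ hj => by
    rw [List.count_eq_zero_of_not_mem (mt List.mem_toFinset.2 hj), pow_zero]

lemma HolderBall.abs_wder_le (hf : HolderBall d β f) {W : List (Fin d)}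
    (hW : W.length ≤ lbelow β) (x : Fin d → ℝ) : |wder W f x| ≤ 1 := by
  rw [wder_eq_mder W (hf.1.of_le (by exact_mod_cast hW))]
  exact hf.2.1 _ (by rwa [sum_count_eq_length]) x

lemma HolderBall.abs_wder_sub_le (hf : HolderBall d β f) {W : List (Fin d)}
    (hW : W.length = lbelow β) (x y : Fin d → ℝ) :
    |wder W f x - wder W f y| ≤ nrm (x - y) ^ (β - (lbelow β : ℝ)) := by
  rw [wder_eq_mder W (hf.1.of_le (by exact_mod_cast hW.le))]
  exact hf.2.2 _ (by rwa [sum_count_eq_length]) x y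

lemma HolderBall.abs_le_one (hf : HolderBall d β f) (x : Fin d → ℝ) : |f x| ≤ 1 :=
  hf.abs_wder_le (W := []) (Nat.zero_le _) x

lemma fderiv_apply_eq_sum_pder (f : (Fin d → ℝ) → ℝ) (z v : Fin d → ℝ) :
    fderiv ℝ f z v = ∑ j, v j * pder d j f z := by
  conv_lhs => rw [pi_eq_sum_univ' v]
  simp only [map_sum, map_smul, smul_eq_mul, pder]

lemma hasDerivAt_wder_line {n : ℕ} (hf : ContDiff ℝ (n + 1 : ℕ) f) (W : Fin n → Fin d)
    (z v : Fin d → ℝ) (t : ℝ) :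
    HasDerivAt (fun t : ℝ => wder (List.ofFn W) f (z + t • v))
      (∑ j, v j * wder (j :: List.ofFn W) f (z + t • v)) t := by
  have hW : ContDiff ℝ (1 : ℕ) (wder (List.ofFn W) f) :=
    contDiff_wder _ (by rwa [List.length_ofFn, Nat.add_comm])
  have hline : HasDerivAt (fun t : ℝ => z + t • v) v t := by
    simpa using ((hasDerivAt_id t).smul_const v).const_add z
  have h := ((hW.differentiable (by simp)) (z + t • v)).hasFDerivAt.comp_hasDerivAt t hline
  rwa [fderiv_apply_eq_sum_pder] at h

lemma iteratedDeriv_line {n : ℕ} (hf : ContDiff ℝ n f) (z v : Fin d → ℝ) :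
    iteratedDeriv n (fun t : ℝ => f (z + t • v)) = fun t => dirDeriv n f (z + t • v) v := by
  induction n with
  | zero => funext t; simp [dirDeriv, wder]
  | succ n ih =>
    rw [iteratedDeriv_succ, ih (hf.of_le (by norm_cast; omega))]
    funext t
    have hderiv := (HasDerivAt.fun_sum (u := Finset.univ) fun W _ =>
      (hasDerivAt_wder_line hf W z v t).const_mul (∏ i, v (W i))).deriv
    unfold dirDeriv
    rw [hderiv, ← (Fin.consEquiv fun _ => Fin d).sum_comp, Fintype.sum_prod_type, Finset.sum_comm]
    refine Finset.sum_congr rfl fun W _ => ?_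
    rw [Finset.mul_sum]
    refine Finset.sum_congr rfl fun j _ => ?_
    simp only [Fin.consEquiv_apply, Fin.prod_univ_succ, Fin.cons_zero, Fin.cons_succ,
      List.ofFn_succ]
    ring

/- Lagrange's form of the remainder, with the last Taylor term moved into the remainder. -/
lemma exists_sub_taylorSum_eq {n : ℕ} (hf : ContDiff ℝ n f) (z v : Fin d → ℝ) :
    ∃ t : ℝ, |t| ≤ 1 ∧ f (z + v) - taylorSum n f z v =
      (n.factorial : ℝ)⁻¹ * (dirDeriv n f (z + t • v) v - dirDeriv n f z v) := by
  rcases n with _ | n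
  · exact ⟨1, by simp, by simp [taylorSum, dirDeriv, wder]⟩
  have hline : ContDiff ℝ (n + 1 : ℕ) fun t : ℝ => f (z + t • v) := hf.comp (by fun_prop)
  obtain ⟨t, ht, hrem⟩ := taylor_mean_remainder_lagrange_iteratedDeriv (n := n)
    (f := fun t : ℝ => f (z + t • v)) (x₀ := 0) (x := 1) zero_ne_one
    (by exact_mod_cast hline.contDiffOn)
  rw [Set.uIoo_of_le zero_le_one] at ht
  refine ⟨t, (abs_of_pos ht.1).trans_le ht.2.le, ?_⟩
  have hterm (k : ℕ) (hk : k ∈ Finset.range (n + 1)) :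
      iteratedDerivWithin k (fun t : ℝ => f (z + t • v)) (Set.Icc 0 1) 0 = dirDeriv k f z v := by
    have hk' : k ≤ n + 1 := (Finset.mem_range.1 hk).le
    rw [iteratedDerivWithin_eq_iteratedDeriv (uniqueDiffOn_Icc zero_lt_one)
      (hline.of_le (by exact_mod_cast hk')).contDiffAt (by simp),
      iteratedDeriv_line (hf.of_le (by exact_mod_cast hk'))]
    simp
  simp only [iteratedDeriv_line hf, taylor_within_apply, Set.uIcc_of_le (zero_le_one (α := ℝ)),
    sub_zero, one_pow, mul_one, smul_eq_mul, one_smul,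
    Finset.sum_congr rfl fun k hk => congrArg ((k.factorial : ℝ)⁻¹ * ·) (hterm k hk)] at hrem
  rw [taylorSum, Finset.sum_range_succ, ← sub_sub, hrem]
  ring

lemma nrm_nonneg (v : Fin d → ℝ) : 0 ≤ nrm v := Real.sqrt_nonneg _

lemma nrm_le (v : Fin d → ℝ) : nrm v ≤ d * ‖v‖ := by
  rw [nrm, Real.sqrt_le_left (by positivity)]
  calc ∑ j, v j ^ 2 ≤ ∑ _j : Fin d, ‖v‖ ^ 2 := Finset.sum_le_sum fun j _ =>
        sq_le_sq' (neg_le_of_abs_le (norm_le_pi_norm v j)) (le_of_abs_le (norm_le_pi_norm v j))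
    _ = d * ‖v‖ ^ 2 := by simp
    _ ≤ (d * ‖v‖) ^ 2 := by
        rw [mul_pow]
        gcongr
        exact_mod_cast Nat.le_self_pow two_ne_zero d

lemma HolderBall.abs_dirDeriv_sub_le (hβ : 0 < β) (hf : HolderBall d β f) (z v : Fin d → ℝ)
    {t : ℝ} (ht : |t| ≤ 1) :
    |dirDeriv (lbelow β) f (z + t • v) v - dirDeriv (lbelow β) f z v| ≤ (d * ‖v‖) ^ β := by
  set N := lbelow β
  have hβN : 0 ≤ β - N := sub_nonneg.2 (lbelow_lt hβ).le
  have hnrm : nrm (z + t • v - z) ≤ d * ‖v‖ := by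
    refine (nrm_le _).trans (mul_le_mul_of_nonneg_left ?_ d.cast_nonneg)
    rw [add_sub_cancel_left, norm_smul]
    exact mul_le_of_le_one_left (norm_nonneg _) ht
  have hW (W : Fin N → Fin d) :
      |(∏ i, v (W i)) * wder (List.ofFn W) f (z + t • v) -
        (∏ i, v (W i)) * wder (List.ofFn W) f z| ≤ ‖v‖ ^ N * (d * ‖v‖) ^ (β - N) := by
    rw [← mul_sub, abs_mul, Finset.abs_prod]
    refine mul_le_mul ?_ ?_ (abs_nonneg _) (by positivity)
    · exact (Finset.prod_le_prod (fun _ _ => abs_nonneg _)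
        fun i _ => norm_le_pi_norm v (W i)).trans (by simp)
    · exact (hf.abs_wder_sub_le List.length_ofFn _ _).trans
        (Real.rpow_le_rpow (nrm_nonneg _) hnrm hβN)
  calc _ ≤ ∑ _W : Fin N → Fin d, ‖v‖ ^ N * (d * ‖v‖) ^ (β - N) := by
        rw [dirDeriv, dirDeriv, ← Finset.sum_sub_distrib]
        exact (Finset.abs_sum_le_sum_abs _ _).trans (Finset.sum_le_sum fun W _ => hW W)
    _ = (d * ‖v‖) ^ (N : ℝ) * (d * ‖v‖) ^ (β - N) := by
        simp [Real.rpow_natCast, mul_pow, mul_assoc]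
    _ = (d * ‖v‖) ^ β := by
        rw [← Real.rpow_add' (by positivity) (by simpa using hβ.ne'), add_sub_cancel]

lemma inv_factorial_le_one (n : ℕ) : (n.factorial : ℝ)⁻¹ ≤ 1 :=
  inv_le_one_of_one_le₀ (by exact_mod_cast n.factorial_pos)

lemma HolderBall.abs_sub_taylorSum_le (hβ : 0 < β) (hf : HolderBall d β f) (z v : Fin d → ℝ) :
    |f (z + v) - taylorSum (lbelow β) f z v| ≤ (d * ‖v‖) ^ β := by
  obtain ⟨t, ht, hrem⟩ := exists_sub_taylorSum_eq hf.1 z v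
  rw [hrem, abs_mul, abs_of_nonneg (by positivity)]
  exact (mul_le_of_le_one_left (abs_nonneg _) (inv_factorial_le_one _)).trans
    (hf.abs_dirDeriv_sub_le hβ z v ht)

lemma sum_mul_taylorSum {ι : Type*} [Fintype ι] (N : ℕ) (f : (Fin d → ℝ) → ℝ)
    (z : Fin d → ℝ) (y : ι → Fin d → ℝ) (c : ι → ℝ) :
    ∑ i, c i * taylorSum N f z (y i) =
      ∑ q ∈ Finset.range (N + 1), (q.factorial : ℝ)⁻¹ * ∑ W : Fin q → Fin d,
        moment y c (fun j => (List.ofFn W).count j) * wder (List.ofFn W) f z := by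
  simp only [taylorSum, dirDeriv, moment, prod_apply_eq_monom, Finset.mul_sum, Finset.sum_mul]
  rw [Finset.sum_comm]
  refine Finset.sum_congr rfl fun q _ => ?_
  rw [Finset.sum_comm]
  exact Finset.sum_congr rfl fun W _ => Finset.sum_congr rfl fun i _ => by ring

lemma HolderBall.abs_sum_mul_taylorSum_le {ι : Type*} [Fintype ι] (hf : HolderBall d β f)
    (z : Fin d → ℝ) {y : ι → Fin d → ℝ} {c : ι → ℝ} {D : ℝ}
    (hD : ∀ k ∈ multiIdx d (lbelow β), |moment y c k| ≤ D) :
    |∑ i, c i * taylorSum (lbelow β) f z (y i)| ≤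
      (∑ q ∈ Finset.range (lbelow β + 1), (d : ℝ) ^ q) * D := by
  rw [sum_mul_taylorSum, Finset.sum_mul]
  refine (Finset.abs_sum_le_sum_abs _ _).trans (Finset.sum_le_sum fun q hq => ?_)
  have hlen (W : Fin q → Fin d) : (List.ofFn W).length ≤ lbelow β := by
    rw [List.length_ofFn]
    exact Nat.lt_succ_iff.1 (Finset.mem_range.1 hq)
  rw [abs_mul, abs_of_nonneg (by positivity)]
  refine (mul_le_of_le_one_left (abs_nonneg _) (inv_factorial_le_one _)).trans ?_
  refine (Finset.abs_sum_le_sum_abs _ _).trans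
    ((Finset.sum_le_sum (g := fun _ => D) fun W _ => ?_).trans (by simp))
  rw [abs_mul]
  exact (mul_le_of_le_one_right (abs_nonneg _) (hf.abs_wder_le (hlen W) z)).trans
    (hD _ (mem_multiIdx.2 (by rw [sum_count_eq_length]; exact hlen W)))

lemma HolderBall.abs_sum_mul_le {ι : Type*} [Fintype ι] (hβ : 0 < β) (hf : HolderBall d β f)
    (z : Fin d → ℝ) {y : ι → Fin d → ℝ} {c : ι → ℝ} {s D : ℝ} (hy : ∀ i, ‖y i‖ ≤ s)
    (hD : ∀ k ∈ multiIdx d (lbelow β), |moment y c k| ≤ D) :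
    |∑ i, c i * f (z + y i)| ≤ (∑ i, |c i|) * (d * s) ^ β +
      (∑ q ∈ Finset.range (lbelow β + 1), (d : ℝ) ^ q) * D := by
  have hsplit : ∑ i, c i * f (z + y i) =
      ∑ i, c i * (f (z + y i) - taylorSum (lbelow β) f z (y i)) +
        ∑ i, c i * taylorSum (lbelow β) f z (y i) := by
    rw [← Finset.sum_add_distrib]
    exact Finset.sum_congr rfl fun i _ => by ring
  rw [hsplit, Finset.sum_mul]
  refine (abs_add_le _ _).trans (add_le_add ?_ (hf.abs_sum_mul_taylorSum_le z hD))
  refine (Finset.abs_sum_le_sum_abs _ _).trans (Finset.sum_le_sum fun i _ => ?_)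
  rw [abs_mul]
  refine mul_le_mul_of_nonneg_left ((hf.abs_sub_taylorSum_le hβ z (y i)).trans ?_) (abs_nonneg _)
  exact Real.rpow_le_rpow (by positivity) (by gcongr; exact hy i) hβ.le

end Taylor

/-! ### Stability and accuracy of kriging -/

section KrigingBounds

variable {α c δ : ℝ} {d l n : ℕ}

/-- The geometric hypotheses after rescaling to the unit cube: as many points of `[0,1]^d` as there
are monomials of degree at most `l`, `δ`-separated, and norming for polynomials of degree at most
`l` with constant `c`. -/
structure UnitCubeNodes (l : ℕ) (c δ : ℝ) {d n : ℕ} (y : Fin n → Fin d → ℝ) : Prop where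
  card_eq : n = (multiIdx d l).card
  mem_Icc : ∀ i, y i ∈ Set.Icc 0 1
  isNorming : IsNorming l (Set.Icc 0 1) y c
  le_norm_sub : ∀ i j, i ≠ j → δ ≤ ‖y i - y j‖

lemma UnitCubeNodes.isUnit_det_maternMat {y : Fin n → Fin d → ℝ} (hy : UnitCubeNodes l c δ y)
    (hα : 0 < α) (hc : 0 ≤ c) (hδ : 0 < δ) {h : ℝ} (h0 : 0 < h) :
    IsUnit (maternMat α d (h • y)).det := by
  obtain ⟨κ, hκ, hcoer⟩ := exists_moment_sq_le_maternForm hα d l hc hδ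
  obtain ⟨B, -, hcoeff⟩ := exists_abs_le_of_abs_moment_le d l hc
  have hmin : 0 < min h 1 := by positivity
  refine isUnit_det_maternMat_of_maternForm_ne_zero fun b hb hform => hb (funext fun i => ?_)
  have hmom (k) (hk : k ∈ multiIdx d l) : |moment (min h 1 • y) b k| ≤ 0 := by
    have hle := hcoer hy.card_eq y hy.mem_Icc hy.isNorming hy.le_norm_sub h h0 b k hk
    rw [hform] at hle
    have hsq := nonpos_of_mul_nonpos_right hle hκ
    rw [pow_eq_zero_iff two_ne_zero |>.1 (hsq.antisymm (sq_nonneg _)), abs_zero]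
  have hle := hcoeff hy.card_eq y hy.isNorming _ ⟨hmin.le, min_le_right _ _⟩ b 0 hmom i
  rw [mul_zero] at hle
  exact abs_nonpos_iff.1 (nonpos_of_mul_nonpos_right hle (by positivity))

lemma exists_abs_krigingWeight_le_of_one_le (hα : 0 < α) (d l : ℕ) (hc : 0 ≤ c) (hδ : 0 < δ) :
    ∃ C > (0 : ℝ), ∀ {n : ℕ} {y : Fin n → Fin d → ℝ}, UnitCubeNodes l c δ y → ∀ h : ℝ, 1 ≤ h →
      ∀ x i, |krigingWeight α d (h • y) x i| ≤ C := by
  obtain ⟨κ, hκ, hcoer⟩ := exists_moment_sq_le_maternForm hα d l hc hδ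
  obtain ⟨B, hB, hcoeff⟩ := exists_abs_le_of_abs_moment_le d l hc
  have hK := matern_zero_pos hα d
  refine ⟨B * √(matern α d 0 / κ), by positivity, fun {n y} hy h h1 x i => ?_⟩
  have h0 : 0 < h := one_pos.trans_le h1
  have hmom (k) (hk : k ∈ multiIdx d l) :
      |moment ((1 : ℝ) • y) (krigingWeight α d (h • y) x) k| ≤ √(matern α d 0 / κ) := by
    refine Real.abs_le_sqrt ((le_div_iff₀' hκ).2 ?_)
    have hle := hcoer hy.card_eq y hy.mem_Icc hy.isNorming hy.le_norm_sub h h0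
      (krigingWeight α d (h • y) x) k hk
    rw [min_eq_right h1] at hle
    exact hle.trans (maternForm_krigingWeight_le hα (hy.isUnit_det_maternMat hα hc hδ h0) x)
  simpa using hcoeff hy.card_eq y hy.isNorming 1 (by simp) _ _ hmom i

/- The error functional of the reproducing rule `v` annihilates polynomials of degree at most `l`,
so its energy is small, and the kriging weights are at most that far from `v`. -/
lemma exists_maternForm_sub_krigingWeight_le_sq (hα : 0 < α) (hαl : α ≤ (l + 1 : ℕ)) (hd : 1 ≤ d)
    (hc : 0 ≤ c) (hδ : 0 < δ) :
    ∃ C > (0 : ℝ), ∀ {n : ℕ} {y : Fin n → Fin d → ℝ}, UnitCubeNodes l c δ y → ∀ p ∈ Set.Icc 0 1,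
      ∀ v : Fin n → ℝ, (∀ i, |v i| ≤ c) → (∀ k ∈ multiIdx d l, moment y v k = monom p k) →
      ∀ h : ℝ, 0 < h → h ≤ 1 →
        maternForm α d (h • y) (v - krigingWeight α d (h • y) (h • p)) ≤
          (C * (h ^ α * logFactor α (l + 1) h)) ^ 2 := by
  obtain ⟨C, hC, henergy⟩ := exists_maternForm_smul_le hα hαl hd
  refine ⟨C * (1 + (multiIdx d l).card * c), by positivity,
    fun {n y} hy p hp v hv hvm h h0 h1 => ?_⟩
  have hT : 0 ≤ h ^ α * logFactor α (l + 1) h :=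
    mul_nonneg (by positivity) (zero_le_one.trans (one_le_logFactor α (l + 1) h0 h1))
  have hvanish (k) (hk : k ∈ multiIdx d l) : moment (errorNodes p y) (errorCoeffs v) k = 0 :=
    (sum_errorCoeffs_mul p y v (monom · k)).trans (sub_eq_zero.2 (hvm k hk).symm)
  have hcoeffs : ∑ o, |errorCoeffs v o| ≤ 1 + (multiIdx d l).card * c := by
    rw [← hy.card_eq]
    exact sum_abs_errorCoeffs_le hv
  calc maternForm α d (h • y) (v - krigingWeight α d (h • y) (h • p))
      ≤ maternForm α d (h • errorNodes p y) (errorCoeffs v) := by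
        rw [← errorNodes_smul]
        exact maternForm_sub_krigingWeight_le hα (hy.isUnit_det_maternMat hα hc hδ h0) _ v
    _ ≤ _ := henergy _ _ (errorNodes_mem hp hy.mem_Icc) hvanish h h0 h1
    _ ≤ _ := by gcongr

lemma exists_abs_moment_sub_krigingWeight_le (hα : 0 < α) (hαl : α ≤ (l + 1 : ℕ)) (hd : 1 ≤ d)
    (hc : 0 ≤ c) (hδ : 0 < δ) :
    ∃ C > (0 : ℝ), ∀ {n : ℕ} {y : Fin n → Fin d → ℝ}, UnitCubeNodes l c δ y → ∀ p ∈ Set.Icc 0 1,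
      ∀ v : Fin n → ℝ, (∀ i, |v i| ≤ c) → (∀ k ∈ multiIdx d l, moment y v k = monom p k) →
      ∀ h : ℝ, 0 < h → h ≤ 1 → ∀ k ∈ multiIdx d l,
        |moment (h • y) (v - krigingWeight α d (h • y) (h • p)) k| ≤
          C * (h ^ α * logFactor α (l + 1) h) := by
  obtain ⟨κ, hκ, hcoer⟩ := exists_moment_sq_le_maternForm hα d l hc hδ
  obtain ⟨C, hC, henergy⟩ := exists_maternForm_sub_krigingWeight_le_sq hα hαl hd hc hδ
  refine ⟨C / √κ, by positivity, fun {n y} hy p hp v hv hvm h h0 h1 k hk => ?_⟩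
  have hT : 0 ≤ h ^ α * logFactor α (l + 1) h :=
    mul_nonneg (by positivity) (zero_le_one.trans (one_le_logFactor α (l + 1) h0 h1))
  set b := v - krigingWeight α d (h • y) (h • p)
  have hsq : κ * moment (h • y) b k ^ 2 ≤ (C * (h ^ α * logFactor α (l + 1) h)) ^ 2 := by
    have hle := hcoer hy.card_eq y hy.mem_Icc hy.isNorming hy.le_norm_sub h h0 b k hk
    rw [min_eq_left h1] at hle
    exact hle.trans (henergy hy p hp v hv hvm h h0 h1)
  rw [← Real.sq_sqrt hκ.le, ← mul_pow] at hsq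
  have habs := abs_le_of_sq_le_sq hsq (by positivity)
  rw [abs_mul, abs_of_pos (Real.sqrt_pos.2 hκ)] at habs
  rwa [div_mul_eq_mul_div, le_div_iff₀' (by positivity)]

lemma rpow_mul_logFactor_le (hl : l < α) {h : ℝ} (h0 : 0 < h) (h1 : h ≤ 1) :
    h ^ α * logFactor α (l + 1) h ≤ h ^ l := by
  unfold logFactor
  split_ifs with he
  · have hlog := Real.log_le_sub_one_of_pos (show 0 < 1 / h by positivity)
    calc h ^ α * (1 + Real.log (1 / h)) ≤ h ^ α * (1 / h) := by gcongr; linarith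
      _ = h ^ l := by rw [he, Real.rpow_natCast, pow_succ]; field_simp
  · rw [mul_one, ← Real.rpow_natCast]
    exact Real.rpow_le_rpow_of_exponent_ge h0 h1 hl.le

lemma exists_krigingWeight_bound_of_le_one (hα : 0 < α) (hl : l < α) (hαl : α ≤ (l + 1 : ℕ))
    (hd : 1 ≤ d) (hc : 0 ≤ c) (hδ : 0 < δ) :
    ∃ C > (0 : ℝ), ∀ {n : ℕ} {y : Fin n → Fin d → ℝ}, UnitCubeNodes l c δ y → ∀ p ∈ Set.Icc 0 1,
      ∀ h : ℝ, 0 < h → h ≤ 1 →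
        (∀ i, |krigingWeight α d (h • y) (h • p) i| ≤ C) ∧
        ∀ k ∈ multiIdx d l, |moment (h • errorNodes p y)
          (errorCoeffs (krigingWeight α d (h • y) (h • p))) k| ≤
            C * (h ^ α * logFactor α (l + 1) h) := by
  obtain ⟨C, hC, hmoment⟩ := exists_abs_moment_sub_krigingWeight_le hα hαl hd hc hδ
  obtain ⟨B, hB, hcoeff⟩ := exists_abs_le_of_abs_moment_le d l hc
  refine ⟨c + B * C + C, by positivity, fun {n y} hy p hp h h0 h1 => ?_⟩
  obtain ⟨v, hv, hvm⟩ := hy.isNorming.exists_moment_eq_monom hc hy.card_eq hp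
  set u := krigingWeight α d (h • y) (h • p)
  have hmom (k) (hk : k ∈ multiIdx d l) := hmoment hy p hp v hv hvm h h0 h1 k hk
  have hT : 0 ≤ h ^ α * logFactor α (l + 1) h :=
    mul_nonneg (by positivity) (zero_le_one.trans (one_le_logFactor α (l + 1) h0 h1))
  refine ⟨fun i => ?_, fun k hk => ?_⟩
  · have hscaled := hcoeff hy.card_eq y hy.isNorming h ⟨h0.le, h1⟩ (v - u) (C * h ^ l)
      (fun k hk => (hmom k hk).trans
        (mul_le_mul_of_nonneg_left (rpow_mul_logFactor_le hl h0 h1) hC.le)) i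
    have hdiff : |v i - u i| ≤ B * C :=
      le_of_mul_le_mul_left (hscaled.trans_eq (by ring)) (pow_pos h0 l)
    have htri : |u i| ≤ |v i| + |v i - u i| := by
      simpa using abs_sub (v i) (v i - u i)
    linarith [hv i]
  · have herr : moment (h • errorNodes p y) (errorCoeffs u) k = moment (h • y) (v - u) k := by
      rw [moment_smul, moment_smul]
      have hsum := sum_errorCoeffs_mul p y u (monom · k)
      rw [← hvm k hk] at hsum
      exact congrArg _ (hsum.trans (by simp [moment, sub_mul]))
    rw [herr]
    exact (hmom k hk).trans (mul_le_mul_of_nonneg_right (by linarith [mul_pos hB hC]) hT)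

end KrigingBounds

/-! ### Scales -/

section Scales

variable {α β τ L s cd cL : ℝ}

open Classical in
/-- The factor `Λ` of the error bound: `log (1 / L)` when `α` is an integer and `1` otherwise. -/
def errorFactor (α L : ℝ) : ℝ := if IsNatVal α then Real.log (1 / L) else 1

/-- The rate `(τ^α L^α + L^β) Λ` of the error bound. -/
def errorRate (α β τ L : ℝ) : ℝ := (τ ^ α * L ^ α + L ^ β) * errorFactor α L

lemma log_two_le_log_one_div (h0 : 0 < L) (h1 : L ≤ 1 / 2) : Real.log 2 ≤ Real.log (1 / L) := by
  gcongr
  rw [le_div_iff₀ h0]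
  linarith

lemma log_two_le_errorFactor (α : ℝ) (h0 : 0 < L) (h1 : L ≤ 1 / 2) :
    Real.log 2 ≤ errorFactor α L := by
  unfold errorFactor
  split_ifs
  · exact log_two_le_log_one_div h0 h1
  · linarith [Real.log_two_lt_d9]

lemma errorFactor_pos (α : ℝ) (h0 : 0 < L) (h1 : L ≤ 1 / 2) : 0 < errorFactor α L :=
  (Real.log_pos one_lt_two).trans_le (log_two_le_errorFactor α h0 h1)

lemma errorRate_nonneg (α β : ℝ) (h0 : 0 < L) (h1 : L ≤ 1 / 2) (hτ : 0 < τ) :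
    0 ≤ errorRate α β τ L :=
  mul_nonneg (by positivity) (errorFactor_pos α h0 h1).le

lemma rpow_sub_natCast_le {q : ℕ} (hq : q ≤ α) (hτ : 0 < τ) : τ ^ (α - q) ≤ τ ^ α + 1 := by
  rcases le_or_gt τ 1 with h | h
  · exact (Real.rpow_le_one hτ.le h (sub_nonneg.2 hq)).trans
      (le_add_of_nonneg_left (by positivity))
  · exact (Real.rpow_le_rpow_of_exponent_le h.le (sub_le_self α q.cast_nonneg)).trans
      (le_add_of_nonneg_right zero_le_one)

lemma rpow_mul_neg_log_le_one {γ : ℝ} (hγ : 1 ≤ γ) (hτ : 0 < τ) : τ ^ γ * -Real.log τ ≤ 1 := by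
  rcases le_or_gt τ 1 with h | h
  · calc τ ^ γ * -Real.log τ ≤ |Real.log τ * τ ^ γ| := by
          rw [mul_neg, mul_comm]
          exact neg_le_abs _
      _ ≤ 1 / γ := (Real.abs_log_mul_self_rpow_lt τ γ hτ h (by linarith)).le
      _ ≤ 1 := (div_le_one (by linarith)).2 hγ
  · exact (mul_nonpos_of_nonneg_of_nonpos (by positivity)
      (neg_nonpos.2 (Real.log_pos h).le)).trans zero_le_one

lemma one_add_log_one_div_mul_le (hcd : 0 < cd) (h0 : 0 < L) (h1 : L ≤ 1 / 2) (hs : cd * L ≤ s)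
    (hτ : 0 < τ) :
    1 + Real.log (1 / (τ * s)) ≤
      (1 + (1 + |Real.log cd|) / Real.log 2) * Real.log (1 / L) - Real.log τ := by
  have hlog2 : 0 < Real.log 2 := Real.log_pos one_lt_two
  have hs0 : 0 < s := (mul_pos hcd h0).trans_le hs
  have hlog_s : Real.log cd + Real.log L ≤ Real.log s := by
    rw [← Real.log_mul hcd.ne' h0.ne']
    exact Real.log_le_log (by positivity) hs
  have hconst : 1 + |Real.log cd| ≤ (1 + |Real.log cd|) / Real.log 2 * Real.log (1 / L) := by
    rw [div_mul_eq_mul_div, le_div_iff₀ hlog2]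
    exact mul_le_mul_of_nonneg_left (log_two_le_log_one_div h0 h1) (by positivity)
  have hinv : Real.log (1 / L) = -Real.log L := by rw [one_div, Real.log_inv]
  rw [one_div (τ * s), Real.log_inv, Real.log_mul hτ.ne' hs0.ne', add_mul, one_mul]
  linarith [neg_abs_le (Real.log cd)]

lemma exists_rpow_mul_logFactor_le (hα : 0 < α) (hcd : 0 < cd) :
    ∃ E > (0 : ℝ), ∀ (L τ s : ℝ) (q : ℕ), 0 < L → L ≤ 1 / 2 → cd * L ≤ s → 0 < τ →
      q ≤ lbelow α → τ ^ (α - q) * logFactor α (lbelow α + 1) (τ * s) ≤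
        E * ((τ ^ α + 1) * errorFactor α L) := by
  have hlog2 : 0 < Real.log 2 := Real.log_pos one_lt_two
  set E₀ : ℝ := 1 + (1 + |Real.log cd|) / Real.log 2
  refine ⟨E₀ + 1 / Real.log 2, by positivity, fun L τ s q hL hL2 hs hτ hq => ?_⟩
  have hql : (q : ℝ) ≤ lbelow α := by exact_mod_cast hq
  have hpow := rpow_sub_natCast_le (hql.trans (lbelow_lt hα).le) hτ
  have hΛ := log_two_le_errorFactor α hL hL2
  have hΛ0 := errorFactor_pos α hL hL2
  set Λ := errorFactor α L
  have hone : 1 ≤ (τ ^ α + 1) * (1 / Real.log 2 * Λ) := by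
    rw [div_mul_eq_mul_div, one_mul]
    exact one_le_mul_of_one_le_of_one_le (le_add_of_nonneg_left (by positivity))
      ((one_le_div hlog2).2 hΛ)
  unfold logFactor
  split_ifs with he
  · have hlog : Λ = Real.log (1 / L) := if_pos ((isNatVal_iff hα).2 he)
    calc τ ^ (α - q) * (1 + Real.log (1 / (τ * s)))
        ≤ τ ^ (α - q) * (E₀ * Λ - Real.log τ) := by
          rw [hlog]
          gcongr
          exact one_add_log_one_div_mul_le hcd hL hL2 hs hτ
      _ = τ ^ (α - q) * (E₀ * Λ) + τ ^ (α - q) * -Real.log τ := by ring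
      _ ≤ (τ ^ α + 1) * (E₀ * Λ) + (τ ^ α + 1) * (1 / Real.log 2 * Λ) := by
          refine add_le_add (by gcongr) ((rpow_mul_neg_log_le_one ?_ hτ).trans hone)
          push_cast at he
          linarith
      _ = (E₀ + 1 / Real.log 2) * ((τ ^ α + 1) * Λ) := by ring
  · have hΛ1 : Λ = 1 := if_neg (mt (isNatVal_iff hα).1 he)
    have hE : 1 ≤ E₀ + 1 / Real.log 2 := by
      rw [add_assoc]
      exact le_add_of_nonneg_right (by positivity)
    rw [hΛ1, mul_one, mul_one]
    exact hpow.trans (le_mul_of_one_le_left (by positivity) hE)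

lemma le_errorRate_div_log_two (α β : ℝ) (h0 : 0 < L) (h1 : L ≤ 1 / 2) (hτ : 0 < τ) :
    τ ^ α * L ^ α + L ^ β ≤ errorRate α β τ L / Real.log 2 := by
  rw [le_div_iff₀ (Real.log_pos one_lt_two)]
  exact mul_le_mul_of_nonneg_left (log_two_le_errorFactor α h0 h1) (by positivity)

lemma rpow_mul_add_one_mul_errorFactor_le (hβα : β ≤ α) (h0 : 0 < L) (h1 : L ≤ 1 / 2) :
    L ^ α * ((τ ^ α + 1) * errorFactor α L) ≤ errorRate α β τ L := by
  have hΛ := (errorFactor_pos α h0 h1).le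
  have hLα : L ^ α ≤ L ^ β := Real.rpow_le_rpow_of_exponent_ge h0 (by linarith) hβα
  rw [← mul_assoc]
  exact mul_le_mul_of_nonneg_right (by linarith) hΛ

lemma rpow_add_rpow_mul_le_errorRate (hα : 0 ≤ α) (hβ : 0 ≤ β) (hβα : β ≤ α) (hcL : 0 ≤ cL)
    (h0 : 0 < L) (h1 : L ≤ 1 / 2) (hτ : 0 < τ) (hs0 : 0 ≤ s) (hs : s ≤ cL * L) {E : ℝ}
    (hE : 0 ≤ E) :
    s ^ β + s ^ α * (E * ((τ ^ α + 1) * errorFactor α L)) ≤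
      (cL ^ β / Real.log 2 + cL ^ α * E) * errorRate α β τ L := by
  have hpow {γ : ℝ} (hγ : 0 ≤ γ) : s ^ γ ≤ cL ^ γ * L ^ γ := by
    rw [← Real.mul_rpow hcL h0.le]
    exact Real.rpow_le_rpow hs0 hs hγ
  have hΛ := (errorFactor_pos α h0 h1).le
  have hLβ : L ^ β ≤ errorRate α β τ L / Real.log 2 :=
    (le_add_of_nonneg_left (by positivity)).trans (le_errorRate_div_log_two α β h0 h1 hτ)
  calc s ^ β + s ^ α * (E * ((τ ^ α + 1) * errorFactor α L))
      ≤ cL ^ β * L ^ β + cL ^ α * L ^ α * (E * ((τ ^ α + 1) * errorFactor α L)) := by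
        gcongr
        exacts [hpow hβ, hpow hα]
    _ = cL ^ β * L ^ β + cL ^ α * E * (L ^ α * ((τ ^ α + 1) * errorFactor α L)) := by ring
    _ ≤ cL ^ β * (errorRate α β τ L / Real.log 2) + cL ^ α * E * errorRate α β τ L := by
        gcongr
        exact rpow_mul_add_one_mul_errorFactor_le hβα h0 h1
    _ = _ := by ring

lemma one_le_mul_errorRate (hα : 0 ≤ α) (β : ℝ) (hcL : 0 ≤ cL) (h0 : 0 < L) (h1 : L ≤ 1 / 2)
    (hτ : 0 < τ) (hs : s ≤ cL * L) (hτs : 1 ≤ τ * s) :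
    1 ≤ cL ^ α / Real.log 2 * errorRate α β τ L := by
  have hcτL : 1 ≤ cL * (τ * L) := by
    grw [hs] at hτs
    linarith
  calc (1 : ℝ) ≤ (cL * (τ * L)) ^ α := Real.one_le_rpow hcτL hα
    _ = cL ^ α * (τ ^ α * L ^ α) := by
        rw [Real.mul_rpow hcL (by positivity), Real.mul_rpow hτ.le h0.le]
    _ ≤ cL ^ α * (errorRate α β τ L / Real.log 2) := by
        gcongr
        exact (le_add_of_nonneg_right (by positivity)).trans
          (le_errorRate_div_log_two α β h0 h1 hτ)
    _ = _ := by ring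

end Scales

/-! ### Interpolation of Hölder functions -/

section Interpolation

variable {α β : ℝ} {d n : ℕ}

lemma abs_moment_smul_le {ι : Type*} [Fintype ι] {y : ι → Fin d → ℝ} {b : ι → ℝ} {k : Fin d → ℕ}
    {τ s C T M : ℝ} (hτ : 0 < τ) (hs : 0 ≤ s) (hC : 0 ≤ C)
    (hmom : |moment ((τ * s) • y) b k| ≤ C * ((τ * s) ^ α * T))
    (hM : τ ^ (α - (∑ j, k j : ℕ)) * T ≤ M) :
    |moment (s • y) b k| ≤ C * (s ^ α * M) := by
  set q := ∑ j, k j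
  have hτq : 0 < τ ^ q := by positivity
  have hτα : τ ^ α = τ ^ q * τ ^ (α - q) := by
    rw [← Real.rpow_natCast, ← Real.rpow_add hτ, add_sub_cancel]
  refine le_of_mul_le_mul_left ?_ hτq
  calc τ ^ q * |moment (s • y) b k| = |moment ((τ * s) • y) b k| := by
        rw [mul_smul, moment_smul τ, abs_mul, abs_of_pos hτq]
    _ ≤ C * ((τ * s) ^ α * T) := hmom
    _ = τ ^ q * (C * (s ^ α * (τ ^ (α - q) * T))) := by
        rw [Real.mul_rpow hτ.le hs, hτα]
        ring
    _ ≤ _ := by gcongr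

lemma exists_abs_sub_krigingWeight_dotProduct_le_of_le_one (hα : 0 < α) (hβ : 0 < β)
    (hβα : β ≤ α) (hd : 1 ≤ d) {c δ : ℝ} (hc : 0 ≤ c) (hδ : 0 < δ) :
    ∃ C > (0 : ℝ), ∀ {n : ℕ} {y : Fin n → Fin d → ℝ}, UnitCubeNodes (lbelow α) c δ y →
      ∀ p ∈ Set.Icc 0 1, ∀ f, HolderBall d β f → ∀ (z : Fin d → ℝ) (s τ M : ℝ), 0 < s → 0 < τ →
        τ * s ≤ 1 →
        (∀ q ≤ lbelow α, τ ^ (α - q) * logFactor α (lbelow α + 1) (τ * s) ≤ M) →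
        |f (z + s • p) - krigingWeight α d ((τ * s) • y) ((τ * s) • p) ⬝ᵥ
          fun i => f (z + s • y i)| ≤ C * (s ^ β + s ^ α * M) := by
  obtain ⟨C, hC, hkrig⟩ :=
    exists_krigingWeight_bound_of_le_one hα (lbelow_lt hα) (le_lbelow_add_one hα) hd hc hδ
  set N : ℝ := ((multiIdx d (lbelow α)).card : ℝ) with hN
  set S : ℝ := ∑ q ∈ Finset.range (lbelow β + 1), (d : ℝ) ^ q with hS
  refine ⟨(1 + N * C) * d ^ β + S * C, by positivity,
    fun {n y} hy p hp f hf z s τ M hs hτ h1 hM => ?_⟩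
  obtain ⟨hu, hmom⟩ := hkrig hy p hp (τ * s) (by positivity) h1
  set u := krigingWeight α d ((τ * s) • y) ((τ * s) • p)
  have hM0 : 0 ≤ M := (mul_nonneg (by positivity) (zero_le_one.trans
    (one_le_logFactor α _ (by positivity) h1))).trans (hM 0 (Nat.zero_le _))
  have hnodes (o) : ‖(s • errorNodes p y) o‖ ≤ s := by
    rw [Pi.smul_apply, norm_smul, Real.norm_of_nonneg hs.le]
    exact mul_le_of_le_one_right hs.le
      (norm_le_one_of_mem_Icc (errorNodes_mem hp hy.mem_Icc o))
  have hmom' (k) (hk : k ∈ multiIdx d (lbelow β)) :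
      |moment (s • errorNodes p y) (errorCoeffs u) k| ≤ C * (s ^ α * M) := by
    have hkα : ∑ j, k j ≤ lbelow α := (mem_multiIdx.1 hk).trans (lbelow_mono hβα)
    exact abs_moment_smul_le hτ hs.le hC.le (hmom k (mem_multiIdx.2 hkα)) (hM _ hkα)
  have herr := hf.abs_sum_mul_le hβ z hnodes hmom'
  simp only [Pi.smul_apply, sum_errorCoeffs_mul p y u fun v => f (z + s • v)] at herr
  calc _ ≤ (1 + N * C) * (d * s) ^ β + S * (C * (s ^ α * M)) := by
        rw [hN, ← hy.card_eq]
        refine herr.trans ?_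
        grw [sum_abs_errorCoeffs_le hu]
    _ = (1 + N * C) * d ^ β * s ^ β + S * C * (s ^ α * M) := by
        rw [Real.mul_rpow (by positivity) hs.le]
        ring
    _ ≤ ((1 + N * C) * d ^ β + S * C) * (s ^ β + s ^ α * M) := by
        rw [add_mul ((1 + N * C) * d ^ β)]
        gcongr
        exacts [le_add_of_nonneg_right (by positivity), le_add_of_nonneg_left (by positivity)]

lemma HolderBall.abs_sub_dotProduct_le {f : (Fin d → ℝ) → ℝ} (hf : HolderBall d β f)
    {v : Fin n → ℝ} {C : ℝ} (hv : ∀ i, |v i| ≤ C) (x : Fin d → ℝ) (w : Fin n → Fin d → ℝ) :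
    |f x - v ⬝ᵥ fun i => f (w i)| ≤ 1 + n * C := by
  calc |f x - v ⬝ᵥ fun i => f (w i)|
      = |∑ o, errorCoeffs v o * f (errorNodes x w o)| := by rw [sum_errorCoeffs_mul, dotProduct]
    _ ≤ ∑ o, |errorCoeffs v o| := by
        refine (Finset.abs_sum_le_sum_abs _ _).trans (Finset.sum_le_sum fun o _ => ?_)
        rw [abs_mul]
        exact mul_le_of_le_one_right (abs_nonneg _) (hf.abs_le_one _)
    _ ≤ 1 + n * C := sum_abs_errorCoeffs_le hv

lemma GeomHyp.exists_unitCubeNodes {cL cd cN L : ℝ} (hcd : 0 < cd) (hcL : 0 < cL) (hL : 0 < L)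
    {w : Fin ((lbelow α + d).choose (lbelow α)) → Fin d → ℝ} {x : Fin d → ℝ}
    (h : GeomHyp α d cL cd cN L w x) :
    ∃ z s p y, cd * L ≤ s ∧ s ≤ cL * L ∧ x = z + s • p ∧ (w = fun i => z + s • y i) ∧
      p ∈ Set.Icc 0 1 ∧ UnitCubeNodes (lbelow α) cN (cd / cL) y := by
  obtain ⟨z, s, -, hsL, hwz, hxz, hsep, hxsep, hnorm⟩ := h
  have hs : cd * L ≤ s := by
    have hn : 0 < (lbelow α + d).choose (lbelow α) := Nat.choose_pos (Nat.le_add_right _ _)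
    obtain ⟨t, ht⟩ := hxsep ⟨0, hn⟩
    refine ht.trans (abs_le.2 ⟨?_, ?_⟩) <;>
      linarith [(hwz ⟨0, hn⟩ t).1, (hwz ⟨0, hn⟩ t).2, (hxz t).1, (hxz t).2]
  have hs0 : 0 < s := (mul_pos hcd hL).trans_le hs
  have hunit {a : Fin d → ℝ} (ha : a ∈ cube d z s) : s⁻¹ • (a - z) ∈ Set.Icc 0 1 := by
    refine ⟨fun t => mul_nonneg (by positivity) (sub_nonneg.2 (ha t).1), fun t => ?_⟩
    exact (inv_mul_le_one₀ hs0).2 (sub_le_iff_le_add'.2 (ha t).2)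
  have hback (a : Fin d → ℝ) : z + s • s⁻¹ • (a - z) = a := by
    rw [smul_inv_smul₀ hs0.ne', add_sub_cancel]
  have hnorm' : IsNorming (lbelow α) (cube d z s) (fun i => z + s • s⁻¹ • (w i - z)) cN := by
    simpa only [hback] using hnorm
  refine ⟨z, s, s⁻¹ • (x - z), fun i => s⁻¹ • (w i - z), hs, hsL, (hback x).symm,
    funext fun i => (hback (w i)).symm, hunit hxz, (card_multiIdx d _).symm, fun i => hunit (hwz i),
    hnorm'.of_cube hs0, fun i j hij => ?_⟩
  obtain ⟨t, ht⟩ := hsep i j hij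
  rw [← smul_sub, sub_sub_sub_cancel_right, norm_smul, Real.norm_of_nonneg (by positivity),
    inv_mul_eq_div, div_le_div_iff₀ hcL hs0]
  calc cd * s ≤ cd * (cL * L) := by gcongr
    _ = cd * L * cL := by ring
    _ ≤ ‖w i - w j‖ * cL := by
        gcongr
        exact ht.trans (norm_le_pi_norm (w i - w j) t)

lemma maternMat_mul_add_smul (α τ s : ℝ) (z : Fin d → ℝ) (y : Fin n → Fin d → ℝ) :
    maternMat α d (fun i t => τ * (z + s • y i) t) = maternMat α d ((τ * s) • y) := by
  ext i j
  refine congrArg (matern α d) (funext fun t => ?_)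
  simp only [Pi.sub_apply, Pi.add_apply, Pi.smul_apply, smul_eq_mul]
  ring

lemma matern_mul_add_smul_sub (α τ s : ℝ) (z p : Fin d → ℝ) (y : Fin n → Fin d → ℝ) :
    (fun i => matern α d fun t => τ * (z + s • p) t - τ * (z + s • y i) t) =
      maternVec α d ((τ * s) • y) ((τ * s) • p) := by
  funext i
  rw [maternVec, matern_sub_comm]
  refine congrArg (matern α d) (funext fun t => ?_)
  simp only [Pi.sub_apply, Pi.add_apply, Pi.smul_apply, smul_eq_mul]
  ring

lemma exists_abs_sub_krigingWeight_dotProduct_le (hα : 0 < α) (hβ : 0 < β) (hβα : β ≤ α)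
    (hd : 1 ≤ d) {cL cd cN : ℝ} (hcd : 0 < cd) (hcL : 0 < cL) (hcN : 0 ≤ cN) :
    ∃ C > (0 : ℝ), ∀ L, 0 < L → L ≤ 1 / 2 → ∀ {n : ℕ} {y : Fin n → Fin d → ℝ},
      UnitCubeNodes (lbelow α) cN (cd / cL) y → ∀ p ∈ Set.Icc 0 1, ∀ f, HolderBall d β f →
      ∀ (z : Fin d → ℝ) (s τ : ℝ), cd * L ≤ s → s ≤ cL * L → 0 < τ →
        |f (z + s • p) - krigingWeight α d ((τ * s) • y) ((τ * s) • p) ⬝ᵥ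
          fun i => f (z + s • y i)| ≤ C * errorRate α β τ L := by
  have hδ : 0 < cd / cL := by positivity
  obtain ⟨C₁, hC₁, hnear⟩ :=
    exists_abs_sub_krigingWeight_dotProduct_le_of_le_one hα hβ hβα hd hcN hδ
  obtain ⟨C₂, hC₂, hfar⟩ := exists_abs_krigingWeight_le_of_one_le hα d (lbelow α) hcN hδ
  obtain ⟨E, hE, hscale⟩ := exists_rpow_mul_logFactor_le hα hcd
  set N : ℝ := ((multiIdx d (lbelow α)).card : ℝ) with hN
  set F₁ := cL ^ β / Real.log 2 + cL ^ α * E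
  set F₂ := cL ^ α / Real.log 2
  refine ⟨max (C₁ * F₁) ((1 + N * C₂) * F₂), by positivity,
    fun L hL hL2 {n y} hy p hp f hf z s τ hs hsL hτ => ?_⟩
  have hs0 : 0 < s := (mul_pos hcd hL).trans_le hs
  have hR : 0 ≤ errorRate α β τ L := errorRate_nonneg α β hL hL2 hτ
  rcases le_total (τ * s) 1 with h1 | h1
  · calc _ ≤ C₁ * (s ^ β + s ^ α * (E * ((τ ^ α + 1) * errorFactor α L))) :=
          hnear hy p hp f hf z s τ _ hs0 hτ h1 fun q hq => hscale L τ s q hL hL2 hs hτ hq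
      _ ≤ C₁ * (F₁ * errorRate α β τ L) := by
          gcongr
          exact rpow_add_rpow_mul_le_errorRate hα.le hβ.le hβα hcL.le hL hL2 hτ hs0.le hsL hE.le
      _ ≤ _ := by
          rw [← mul_assoc]
          gcongr
          exact le_max_left _ _
  · calc _ ≤ 1 + n * C₂ := hf.abs_sub_dotProduct_le (hfar hy _ h1 _) _ _
      _ ≤ (1 + n * C₂) * (F₂ * errorRate α β τ L) :=
          le_mul_of_one_le_right (by positivity)
            (one_le_mul_errorRate hα.le β hcL.le hL hL2 hτ hsL h1)
      _ ≤ _ := by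
          rw [← mul_assoc, hN, ← hy.card_eq]
          gcongr
          exact le_max_right _ _

end Interpolation

/-- Lemma `Holder appro`: under the geometric hypotheses at scale
`L ∈ (0,1/2]`, for `f₀ ∈ C^β_1` with `β ≤ α` and any `τ > 0`, Matérn kernel interpolation
from `τA` to `τx` applied to the values `f₀(A)` incurs error at most
`C (τ^α L^α + L^β) Λ`. -/
theorem stmt16 (α β : ℝ) (hα : 0 < α) (hβ : 0 < β) (hβα : β ≤ α) (d : ℕ) (hd : 1 ≤ d)
    (cL cd cN : ℝ) (hcd : 0 < cd) (hcLcd : cd ≤ cL) (hcN : 0 < cN) :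
    ∃ C : ℝ, 0 < C ∧
      ∀ L : ℝ, 0 < L → L ≤ 1 / 2 → ∀ x : Fin d → ℝ,
        ∀ w : Fin ((lbelow α + d).choose (lbelow α)) → Fin d → ℝ,
          GeomHyp α d cL cd cN L w x →
          ∀ f₀ : (Fin d → ℝ) → ℝ, HolderBall d β f₀ →
            ∀ τ : ℝ, 0 < τ →
              IsUnit (maternMat α d (fun i t => τ * w i t)).det ∧
              (¬ IsNatVal α →
                |f₀ x - (fun i => matern α d fun t => τ * x t - τ * w i t) ⬝ᵥ
                    ((maternMat α d (fun i t => τ * w i t))⁻¹ *ᵥ fun i => f₀ (w i))| ≤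
                  C * (τ ^ α * L ^ α + L ^ β)) ∧
              (IsNatVal α →
                |f₀ x - (fun i => matern α d fun t => τ * x t - τ * w i t) ⬝ᵥ
                    ((maternMat α d (fun i t => τ * w i t))⁻¹ *ᵥ fun i => f₀ (w i))| ≤
                  C * ((τ ^ α * L ^ α + L ^ β) * Real.log (1 / L))) := by
  have hcL : 0 < cL := hcd.trans_le hcLcd
  obtain ⟨C, hC, hbound⟩ :=
    exists_abs_sub_krigingWeight_dotProduct_le hα hβ hβα hd hcd hcL hcN.le
  refine ⟨C, hC, fun L hL hL2 x w hgeom f₀ hf τ hτ => ?_⟩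
  obtain ⟨z, s, p, y, hs, hsL, rfl, rfl, hp, hy⟩ := hgeom.exists_unitCubeNodes hcd hcL hL
  have hs0 : 0 < s := (mul_pos hcd hL).trans_le hs
  have herr := hbound L hL hL2 hy p hp f₀ hf z s τ hs hsL hτ
  rw [← maternVec_dotProduct_inv_mulVec] at herr
  rw [maternMat_mul_add_smul, matern_mul_add_smul_sub]
  refine ⟨hy.isUnit_det_maternMat hα hcN.le (div_pos hcd hcL) (mul_pos hτ hs0),
    fun hnat => ?_, fun hnat => ?_⟩
  · rwa [errorRate, errorFactor, if_neg hnat, mul_one] at herr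
  · rwa [errorRate, errorFactor, if_pos hnat] at herr
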